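/- arXiv:math/0507156 — 9 statements merged into one kernel-verified Lean document; each statement's English description precedes it below -/
import Mathlib

section
/- For every integer m ≥ 2 and every t ∈ (0,1), one has f_m(t) < f_{m+1}(t) and f_{m+1}(t) < t/(1 − t). -/
open scoped BigOperators

/-- `fm m t = ∑_{k=1}^{m-1} t^k * cos (π / (⌊(m-1)/k⌋ + 2))`, where `(m-1)/k` is the
integer part of `(m-1)/k` (natural number division). -/
noncomputable def fm (m : ℕ) (t : ℝ) : ℝ :=
  ∑ k ∈ Finset.Icc 1 (m - 1), t ^ k * Real.cos (Real.pi / (((m - 1) / k + 2 : ℕ) : ℝ))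

theorem geom_aux (n : ℕ) (t : ℝ) :
    (∑ k ∈ Finset.Icc 1 n, t ^ k) * (1 - t) = t - t ^ (n + 1) := by
  induction n with
  | zero => simp
  | succ n ih =>
    rw [Finset.sum_Icc_succ_top (by omega), add_mul, ih]
    ring

theorem stmt_1 (m : ℕ) (hm : 2 ≤ m) (t : ℝ) (ht : t ∈ Set.Ioo (0 : ℝ) 1) :
    fm m t < fm (m + 1) t ∧ fm (m + 1) t < t / (1 - t) := by
  obtain ⟨h0, h1⟩ := ht
  obtain ⟨n, rfl⟩ : ∃ n, m = n + 1 := ⟨m - 1, by omega⟩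
  unfold fm
  simp only [Nat.add_sub_cancel]
  constructor
  · rw [Finset.sum_Icc_succ_top (by omega)]
    have hlast : 0 < t ^ (n + 1) * Real.cos (Real.pi / (((n + 1) / (n + 1) + 2 : ℕ) : ℝ)) := by
      rw [Nat.div_self (by omega)]
      have : ((1 + 2 : ℕ) : ℝ) = 3 := by norm_num
      rw [this, Real.cos_pi_div_three]
      positivity
    refine lt_of_le_of_lt (Finset.sum_le_sum ?_) (lt_add_of_pos_right _ hlast)
    intro k hk
    refine mul_le_mul_of_nonneg_left ?_ (by positivity)
    have hd : n / k ≤ (n + 1) / k := Nat.div_le_div_right (by omega)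
    apply Real.cos_le_cos_of_nonneg_of_le_pi
    · positivity
    · apply div_le_self Real.pi_pos.le
      exact_mod_cast (le_trans (by norm_num) (Nat.le_add_left 2 (n / k)) : 1 ≤ n / k + 2)
    · apply div_le_div_of_nonneg_left Real.pi_pos.le
      · positivity
      · exact_mod_cast (Nat.add_le_add_right hd 2)
  · rw [lt_div_iff₀ (by linarith)]
    have hle : ∑ k ∈ Finset.Icc 1 (n + 1),
        t ^ k * Real.cos (Real.pi / (((n + 1) / k + 2 : ℕ) : ℝ)) ≤
        ∑ k ∈ Finset.Icc 1 (n + 1), t ^ k :=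
      Finset.sum_le_sum fun k _ => mul_le_of_le_one_right (by positivity) (Real.cos_le_one _)
    refine lt_of_le_of_lt (mul_le_mul_of_nonneg_right hle (by linarith)) ?_
    rw [geom_aux]
    have : 0 < t ^ (n + 1 + 1) := by positivity
    linarith
end

section
/- The sequence (t_m)_{m≥2} satisfies 1/3 < t_{m+1} < t_m for every m ≥ 2 (so it is strictly decreasing and bounded below by 1/3), and t_m → 1/3 as m → ∞. -/
open scoped BigOperators

lemma c_mono {a b : ℕ} (h : a ≤ b) :
    Real.cos (Real.pi / ((a + 2 : ℕ) : ℝ)) ≤ Real.cos (Real.pi / ((b + 2 : ℕ) : ℝ)) := by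
  have hp := Real.pi_pos
  apply Real.cos_le_cos_of_nonneg_of_le_pi
  · positivity
  · apply div_le_self hp.le
    push_cast
    have : (0 : ℝ) ≤ a := by positivity
    linarith
  · gcongr

lemma c_pos {a : ℕ} (h : 1 ≤ a) : 0 < Real.cos (Real.pi / ((a + 2 : ℕ) : ℝ)) := by
  have h1 := c_mono h
  have h2 : Real.cos (Real.pi / ((1 + 2 : ℕ) : ℝ)) = 1 / 2 := by
    rw [← Real.cos_pi_div_three]; norm_num
  linarith

lemma c_pos' {m k : ℕ} (hk : k ∈ Finset.Icc 1 (m - 1)) :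
    0 < Real.cos (Real.pi / (((m - 1) / k + 2 : ℕ) : ℝ)) := by
  rw [Finset.mem_Icc] at hk
  exact c_pos ((Nat.one_le_div_iff (by omega)).2 hk.2)

lemma fm_mono (m : ℕ) {x y : ℝ} (hx : 0 ≤ x) (hxy : x ≤ y) : fm m x ≤ fm m y := by
  unfold fm
  apply Finset.sum_le_sum
  intro k hk
  have := c_pos' hk
  gcongr

lemma fm_lt_succ (m : ℕ) (hm : 2 ≤ m) {x : ℝ} (hx : 0 < x) : fm m x < fm (m + 1) x := by
  obtain ⟨n, rfl⟩ : ∃ n, m = n + 1 := ⟨m - 1, by omega⟩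
  unfold fm
  simp only [Nat.add_sub_cancel]
  rw [Finset.sum_Icc_succ_top (by omega)]
  have h1 : 0 < x ^ (n + 1) * Real.cos (Real.pi / (((n + 1) / (n + 1) + 2 : ℕ) : ℝ)) := by
    apply mul_pos (by positivity)
    apply c_pos
    rw [Nat.div_self (by omega)]
  have h2 : ∑ k ∈ Finset.Icc 1 n, x ^ k * Real.cos (Real.pi / ((n / k + 2 : ℕ) : ℝ)) ≤
      ∑ k ∈ Finset.Icc 1 n, x ^ k * Real.cos (Real.pi / (((n + 1) / k + 2 : ℕ) : ℝ)) := by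
    apply Finset.sum_le_sum
    intro k _
    apply mul_le_mul_of_nonneg_left _ (by positivity)
    exact c_mono (Nat.div_le_div_right (by omega))
  linarith

lemma geo_third (n : ℕ) : ∑ k ∈ Finset.Icc 1 n, (1 / 3 : ℝ) ^ k = 1 / 2 - (1 / 3) ^ n / 2 := by
  induction n with
  | zero => simp
  | succ n ih => rw [Finset.sum_Icc_succ_top (by omega), ih]; ring

lemma fm_third (m : ℕ) : fm m (1 / 3) < 1 / 2 := by
  have h : fm m (1 / 3) ≤ ∑ k ∈ Finset.Icc 1 (m - 1), (1 / 3 : ℝ) ^ k := by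
    unfold fm
    apply Finset.sum_le_sum
    intro k _
    exact mul_le_of_le_one_right (by positivity) (Real.cos_le_one _)
  rw [geo_third] at h
  have : (0 : ℝ) < (1 / 3) ^ (m - 1) := by positivity
  linarith

lemma fm_event {s : ℝ} (hs : 1 / 3 < s) (hs1 : s < 1) :
    ∀ᶠ m : ℕ in Filter.atTop, 1 / 2 < fm m s := by
  have h0 : 0 < s := by linarith
  have hg : Filter.Tendsto (fun K : ℕ => ∑ k ∈ Finset.range K, s ^ k) Filter.atTop
      (nhds (1 - s)⁻¹) := (hasSum_geometric_of_lt_one h0.le hs1).tendsto_sum_nat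
  have hlt : 3 / 2 < (1 - s)⁻¹ := by
    rw [lt_inv_comm₀ (by norm_num) (by linarith)]
    norm_num; linarith
  obtain ⟨K, hK, hK1⟩ := ((hg.eventually (lt_mem_nhds hlt)).and
    (Filter.eventually_ge_atTop 1)).exists
  obtain ⟨N, rfl⟩ : ∃ N, K = N + 1 := ⟨K - 1, by omega⟩
  have hsum : 1 / 2 < ∑ k ∈ Finset.Icc 1 N, s ^ k := by
    rw [Finset.range_eq_Ico, Finset.sum_eq_sum_Ico_succ_bot (by omega)] at hK
    have : Finset.Ico (0 + 1) (N + 1) = Finset.Icc 1 N := by ext x; simp only [Finset.mem_Ico, Finset.mem_Icc]; omega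
    rw [this] at hK
    simp only [pow_zero] at hK
    linarith
  have hlim : Filter.Tendsto (fun m : ℕ => ∑ k ∈ Finset.Icc 1 N,
      s ^ k * Real.cos (Real.pi / (((m - 1) / k + 2 : ℕ) : ℝ))) Filter.atTop
      (nhds (∑ k ∈ Finset.Icc 1 N, s ^ k)) := by
    apply tendsto_finsetSum
    intro k hk
    rw [Finset.mem_Icc] at hk
    have h1 : Filter.Tendsto (fun m : ℕ => (m - 1) / k + 2) Filter.atTop Filter.atTop := by
      apply (Filter.tendsto_add_atTop_nat 2).comp
      exact (Nat.tendsto_div_const_atTop (by omega)).comp (Filter.tendsto_sub_atTop_nat 1)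
    have h2 := (tendsto_natCast_atTop_atTop (R := ℝ)).comp h1
    have h3 := (Real.continuous_cos.tendsto 0).comp (h2.const_div_atTop Real.pi)
    have h4 := h3.const_mul (s ^ k)
    simpa using h4
  filter_upwards [hlim.eventually (lt_mem_nhds hsum), Filter.eventually_ge_atTop (N + 1)]
    with m hm hmN
  refine hm.trans_le ?_
  unfold fm
  apply Finset.sum_le_sum_of_subset_of_nonneg
  · exact Finset.Icc_subset_Icc_right (by omega)
  · intro k hk _
    have := c_pos' hk
    positivity

theorem stmt_2 (t : ℕ → ℝ)
    (ht : ∀ m : ℕ, 2 ≤ m → t m ∈ Set.Ioc (0 : ℝ) 1 ∧ fm m (t m) = 1 / 2) :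
    (∀ m : ℕ, 2 ≤ m → 1 / 3 < t (m + 1) ∧ t (m + 1) < t m) ∧
    Filter.Tendsto t Filter.atTop (nhds (1 / 3)) := by
  have low : ∀ m, 2 ≤ m → 1 / 3 < t m := by
    intro m hm
    obtain ⟨⟨h0, h1⟩, h2⟩ := ht m hm
    by_contra! h
    have := fm_mono m h0.le h
    have := fm_third m
    linarith
  have up : ∀ m, 2 ≤ m → ∀ s, 0 ≤ s → 1 / 2 < fm m s → t m < s := by
    intro m hm s hs h
    by_contra! h'
    have := fm_mono m hs h'
    have := (ht m hm).2
    linarith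
  refine ⟨fun m hm => ⟨low _ (by omega), ?_⟩, ?_⟩
  · obtain ⟨⟨h0, h1⟩, h2⟩ := ht m hm
    apply up (m + 1) (by omega) _ h0.le
    rw [← h2]
    exact fm_lt_succ m hm h0
  · rw [tendsto_order]
    constructor
    · intro a ha
      filter_upwards [Filter.eventually_ge_atTop 2] with m hm
      exact ha.trans (low m hm)
    · intro a ha
      have hs : 1 / 3 < min a (1 / 2) := lt_min ha (by norm_num)
      filter_upwards [Filter.eventually_ge_atTop 2,
        fm_event hs ((min_le_right _ _).trans_lt (by norm_num))] with m hm h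
      exact (up m hm _ (by linarith) h).trans_le (min_le_left _ _)
end

section
/- For every integer m ≥ 3 one has f_m(1) > 1, and there is a unique γ_m ∈ (0,1) with f_m(γ_m) = 1; moreover 1/2 < γ_{m+1} < γ_m for every m ≥ 3 (the sequence (γ_m)_{m≥3} is strictly decreasing and bounded below by 1/2), and γ_m → 1/2 as m → ∞. -/
open scoped BigOperators

/-- The coefficients. -/
noncomputable def cf (m i : ℕ) : ℝ :=
  Real.cos (Real.pi / (((m - 1) / (i + 1) + 2 : ℕ) : ℝ))

lemma fm_eq (m : ℕ) (t : ℝ) :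
    fm m t = ∑ i ∈ Finset.range (m - 1), t ^ (i + 1) * cf m i := by
  unfold fm cf
  rw [Finset.range_eq_Ico, Finset.sum_Ico_add' (fun k => t ^ k * Real.cos (Real.pi / (((m - 1) / k + 2 : ℕ) : ℝ)))]
  rfl

lemma cos_mono {a b : ℕ} (ha : 2 ≤ a) (hab : a ≤ b) :
    Real.cos (Real.pi / (a : ℝ)) ≤ Real.cos (Real.pi / (b : ℝ)) := by
  have hpi := Real.pi_pos
  have ha' : (2 : ℝ) ≤ a := by exact_mod_cast ha
  have hab' : (a : ℝ) ≤ b := by exact_mod_cast hab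
  apply Real.cos_le_cos_of_nonneg_of_le_pi
  · positivity
  · rw [div_le_iff₀ (by linarith)]; nlinarith
  · gcongr

lemma cf_nonneg (m i : ℕ) : 0 ≤ cf m i := by
  have h := cos_mono (a := 2) (b := (m - 1) / (i + 1) + 2) le_rfl (Nat.le_add_left _ _)
  simpa [cf] using h

lemma cf_half {m i : ℕ} (h : i < m - 1) : 1 / 2 ≤ cf m i := by
  have h1 : 1 ≤ (m - 1) / (i + 1) := (Nat.one_le_div_iff (by omega)).2 (by omega)
  have h := cos_mono (a := 3) (b := (m - 1) / (i + 1) + 2) (by norm_num) (by omega)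
  have h3 : Real.cos (Real.pi / ((3 : ℕ) : ℝ)) = 1 / 2 := by simp
  rw [h3] at h
  exact h

lemma cf_le_one (m i : ℕ) : cf m i ≤ 1 := Real.cos_le_one _

lemma cf_mono (m i : ℕ) : cf m i ≤ cf (m + 1) i := by
  apply cos_mono (Nat.le_add_left _ _)
  gcongr
  omega

lemma fm_strictMono {m : ℕ} (hm : 3 ≤ m) {s t : ℝ} (hs : 0 ≤ s) (hst : s < t) :
    fm m s < fm m t := by
  rw [fm_eq, fm_eq]
  apply Finset.sum_lt_sum_of_nonempty (by simp; omega)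
  intro i hi
  have := cf_half (Finset.mem_range.1 hi)
  have h2 : s ^ (i + 1) < t ^ (i + 1) := pow_lt_pow_left₀ hst hs (by omega)
  nlinarith

lemma fm_one {m : ℕ} (hm : 3 ≤ m) : 1 < fm m 1 := by
  have hle : ∑ i ∈ Finset.range 2, (1 : ℝ) ^ (i + 1) * cf m i ≤ fm m 1 := by
    rw [fm_eq]
    apply Finset.sum_le_sum_of_subset_of_nonneg
    · intro i; simp; omega
    · intro i _ _; simpa using cf_nonneg m i
  rw [Finset.sum_range_succ, Finset.sum_range_one] at hle
  have h1 : 1 / 2 ≤ cf m 1 := cf_half (by omega)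
  have h0 : Real.cos (Real.pi / ((4 : ℕ) : ℝ)) ≤ cf m 0 :=
    cos_mono (by norm_num) (by simp; omega)
  have h4 : Real.cos (Real.pi / ((4 : ℕ) : ℝ)) = √2 / 2 := by simp
  rw [h4] at h0
  have : 1 < √2 := Real.lt_sqrt_of_sq_lt (by norm_num)
  simp at hle
  linarith

lemma fm_cont (m : ℕ) : Continuous (fm m) := by
  unfold fm
  fun_prop

lemma fm_zero (m : ℕ) : fm m 0 = 0 := by
  rw [fm_eq]; simp

lemma fm_half (m : ℕ) : fm m (1 / 2) < 1 := by
  rw [fm_eq]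
  have h : ∀ n : ℕ, ∑ i ∈ Finset.range n, (1 / 2 : ℝ) ^ (i + 1) = 1 - (1 / 2) ^ n := by
    intro n
    induction n with
    | zero => simp
    | succ n ih => rw [Finset.sum_range_succ, ih]; ring
  calc _ ≤ ∑ i ∈ Finset.range (m - 1), (1 / 2 : ℝ) ^ (i + 1) := by
        apply Finset.sum_le_sum
        intro i _
        exact mul_le_of_le_one_right (by positivity) (cf_le_one m i)
    _ = 1 - (1 / 2) ^ (m - 1) := h _
    _ < 1 := by
        have : (0 : ℝ) < (1 / 2) ^ (m - 1) := by positivity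
        linarith

lemma fm_succ {m : ℕ} (hm : 3 ≤ m) {t : ℝ} (ht : 0 < t) : fm m t < fm (m + 1) t := by
  rw [fm_eq, fm_eq]
  obtain ⟨n, rfl⟩ : ∃ n, m = n + 1 := ⟨m - 1, by omega⟩
  have e : n + 1 + 1 - 1 = (n + 1 - 1) + 1 := by omega
  rw [e, Finset.sum_range_succ]
  have h1 : 1 / 2 ≤ cf (n + 1 + 1) (n + 1 - 1) := cf_half (by omega)
  have h2 : 0 < t ^ (n + 1 - 1 + 1) * cf (n + 1 + 1) (n + 1 - 1) :=
    mul_pos (by positivity) (by linarith)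
  have h3 : ∑ i ∈ Finset.range (n + 1 - 1), t ^ (i + 1) * cf (n + 1) i ≤
      ∑ i ∈ Finset.range (n + 1 - 1), t ^ (i + 1) * cf (n + 1 + 1) i := by
    apply Finset.sum_le_sum
    intro i _
    exact mul_le_mul_of_nonneg_left (cf_mono _ _) (by positivity)
  linarith

lemma cf_tendsto (i : ℕ) : Filter.Tendsto (fun m => cf m i) Filter.atTop (nhds 1) := by
  have h1 : Filter.Tendsto (fun m : ℕ => (m - 1) / (i + 1) + 2) Filter.atTop Filter.atTop := by
    apply Filter.tendsto_atTop_mono (f := fun m : ℕ => (m - 1) / (i + 1)) (fun m => by omega)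
    exact (Nat.tendsto_div_const_atTop (by omega)).comp (Filter.tendsto_sub_atTop_nat 1)
  have h2 : Filter.Tendsto (fun n : ℕ => Real.cos (Real.pi / (n : ℝ))) Filter.atTop
      (nhds (Real.cos 0)) :=
    (Real.continuous_cos.tendsto 0).comp (tendsto_const_div_atTop_nhds_zero_nat Real.pi)
  rw [Real.cos_zero] at h2
  exact h2.comp h1

lemma fm_large {t : ℝ} (h : 1 / 2 < t) (h1 : t < 1) : ∀ᶠ m in Filter.atTop, 1 < fm m t := by
  have ht : 0 < t := by linarith
  have hs : Filter.Tendsto (fun n => ∑ i ∈ Finset.range n, t ^ (i + 1)) Filter.atTop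
      (nhds ((1 - t)⁻¹ * t)) := by
    have := ((hasSum_geometric_of_lt_one ht.le h1).mul_right t).tendsto_sum_nat
    simpa [pow_succ] using this
  have hgt : 1 < (1 - t)⁻¹ * t := by
    rw [inv_mul_eq_div, lt_div_iff₀ (by linarith)]; linarith
  obtain ⟨K, hK⟩ := (hs.eventually (lt_mem_nhds hgt)).exists
  have hc : Filter.Tendsto (fun m => ∑ i ∈ Finset.range K, t ^ (i + 1) * cf m i) Filter.atTop
      (nhds (∑ i ∈ Finset.range K, t ^ (i + 1) * 1)) :=
    tendsto_finsetSum _ fun i _ => (cf_tendsto i).const_mul _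
  simp only [mul_one] at hc
  filter_upwards [hc.eventually (lt_mem_nhds hK), Filter.eventually_ge_atTop (K + 1)] with m hm hmK
  refine hm.trans_le ?_
  rw [fm_eq]
  apply Finset.sum_le_sum_of_subset_of_nonneg
  · intro i; simp; omega
  · intro i _ _
    exact mul_nonneg (by positivity) (cf_nonneg m i)

theorem stmt_3 (γ : ℕ → ℝ)
    (hγ : ∀ m : ℕ, 3 ≤ m → γ m ∈ Set.Ioo (0 : ℝ) 1 ∧ fm m (γ m) = 1) :
    (∀ m : ℕ, 3 ≤ m → 1 < fm m 1) ∧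
    (∀ m : ℕ, 3 ≤ m → ∃! g : ℝ, g ∈ Set.Ioo (0 : ℝ) 1 ∧ fm m g = 1) ∧
    (∀ m : ℕ, 3 ≤ m → 1 / 2 < γ (m + 1) ∧ γ (m + 1) < γ m) ∧
    Filter.Tendsto γ Filter.atTop (nhds (1 / 2)) := by
  have lt_of : ∀ m : ℕ, 3 ≤ m → ∀ s t : ℝ, 0 ≤ t → fm m s < fm m t → s < t := by
    intro m hm s t ht hlt
    by_contra! hc
    rcases hc.eq_or_lt with rfl | hc
    · exact lt_irrefl _ hlt
    · exact lt_asymm hlt (fm_strictMono hm ht hc)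
  have half_lt : ∀ m : ℕ, 3 ≤ m → 1 / 2 < γ m := by
    intro m hm
    obtain ⟨⟨h0, h1⟩, he⟩ := hγ m hm
    exact lt_of m hm _ _ h0.le (he ▸ fm_half m)
  refine ⟨fun m hm => fm_one hm, fun m hm => ?_, fun m hm => ⟨half_lt _ (by omega), ?_⟩, ?_⟩
  · have hex : ∃ g : ℝ, g ∈ Set.Ioo (0 : ℝ) 1 ∧ fm m g = 1 := by
      have := intermediate_value_Ioo (zero_le_one (α := ℝ)) (fm_cont m).continuousOn
      rw [fm_zero] at this
      obtain ⟨g, hg, he⟩ := this ⟨zero_lt_one, fm_one hm⟩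
      exact ⟨g, hg, he⟩
    obtain ⟨g, hg, he⟩ := hex
    refine ⟨g, ⟨hg, he⟩, ?_⟩
    rintro y ⟨hy, hye⟩
    rcases lt_trichotomy y g with h | h | h
    · have := fm_strictMono hm hy.1.le h
      linarith
    · exact h
    · have := fm_strictMono hm hg.1.le h
      linarith
  · obtain ⟨⟨h0, h1⟩, he⟩ := hγ m hm
    obtain ⟨_, he'⟩ := hγ (m + 1) (by omega)
    apply lt_of (m + 1) (by omega) _ _ h0.le
    rw [he', ← he]
    exact fm_succ hm h0
  · rw [tendsto_order]
    constructor
    · intro a ha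
      filter_upwards [Filter.eventually_ge_atTop 3] with m hm
      exact ha.trans (half_lt m hm)
    · intro a ha
      obtain ⟨t, ht1, ht2⟩ := exists_between (lt_min ha (by norm_num : (1 / 2 : ℝ) < 1))
      have hta := ht2.trans_le (min_le_left _ _)
      have ht1' := ht2.trans_le (min_le_right _ _)
      filter_upwards [Filter.eventually_ge_atTop 3, fm_large ht1 ht1'] with m hm hl
      refine (lt_of m hm _ _ (by linarith) ?_).trans hta
      rw [(hγ m hm).2]
      exact hl
end

section
/- Let m ≥ 2 be an integer and let (a_α)_{|α| ≤ m−1} be complex numbers with a_{g₀} real and a_{g₀} ≥ 0. Set p(S) := ∑_{|α| ≤ m−1} a_α S_α, a bounded operator on ℓ²(𝔽ₙ⁺). If Re p(S) ≤ I, then for every complex Hilbert space 𝒦 and every (T₁,…,Tₙ) ∈ [B(𝒦)ⁿ]_{t_m}, one has ∑_{k=0}^{m−1} ‖∑_{|α|=k} |a_α| T_α‖ ≤ 1. -/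
open scoped BigOperators

/-- The full Fock space, identified with `ℓ²(𝔽ₙ⁺)` where the free monoid `𝔽ₙ⁺` on `n`
generators is identified with `List (Fin n)`. -/
noncomputable abbrev Fock (n : ℕ) : Type := lp (fun _ : List (Fin n) => ℂ) 2

/-- The orthonormal basis vector `e_α` of the Fock space. -/
noncomputable def fockBasis (n : ℕ) (α : List (Fin n)) : Fock n := lp.single 2 α 1

/-- For a word `α = g_{i₁} ⋯ g_{i_k}`, the product `T_α = T_{i₁} ⋯ T_{i_k}` (and `T_{g₀} = 1`). -/
noncomputable def wordProd {n : ℕ} {M : Type*} [Monoid M] (T : Fin n → M)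
    (α : List (Fin n)) : M :=
  (α.map T).prod

open ComplexConjugate in
lemma weight_sum (N : ℕ) (hN : 1 ≤ N) :
    ∃ (z : ℕ → ℂ) (w : ℕ → ℝ), (∀ s, ‖z s‖ = 1) ∧ (∀ s, s < N + 2 → 0 ≤ w s) ∧
      (∑ s ∈ Finset.range (N+2), (w s : ℂ) = (N+2 : ℕ)) ∧
      (∑ s ∈ Finset.range (N+2), (w s : ℂ) * z s = - ((N+2 : ℕ) : ℂ) / (2 * Real.cos (Real.pi / ((N + 2 : ℕ) : ℝ)))) ∧
      (∀ d, 2 ≤ d → d ≤ N → ∑ s ∈ Finset.range (N+2), (w s : ℂ) * z s ^ d = 0) := by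
  set φ : ℝ := Real.pi / ((N + 2 : ℕ) : ℝ) with hφ
  have hL : (0:ℝ) < ((N + 2 : ℕ) : ℝ) := by positivity
  have hφ0 : 0 < φ := by positivity
  have hLφ : ((N + 2 : ℕ) : ℝ) * φ = Real.pi := by rw [hφ]; field_simp
  have hN' : (3:ℝ) ≤ ((N + 2 : ℕ) : ℝ) := by exact_mod_cast (by omega : 3 ≤ N + 2)
  have hφ2 : φ < Real.pi / 2 := by nlinarith
  have hcos : 0 < Real.cos φ := Real.cos_pos_of_mem_Ioo ⟨by linarith, hφ2⟩
  have hcosC : (Real.cos φ : ℂ) ≠ 0 := by exact_mod_cast hcos.ne'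
  let z : ℕ → ℂ := fun s => Complex.exp (((((2 * s + 1 : ℕ) : ℝ) * φ : ℝ) : ℂ) * Complex.I)
  have hz1 : ∀ s, ‖z s‖ = 1 := fun s => Complex.norm_exp_ofReal_mul_I _
  have hz0 : ∀ s, z s ≠ 0 := fun s => Complex.exp_ne_zero _
  -- power sums
  have hprim : IsPrimitiveRoot (Complex.exp (2 * Real.pi * Complex.I / ((N + 2 : ℕ) : ℂ))) (N+2) :=
    Complex.isPrimitiveRoot_exp _ (by omega)
  set ω := Complex.exp (2 * Real.pi * Complex.I / ((N + 2 : ℕ) : ℂ)) with hω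
  have hzs : ∀ s, z s = Complex.exp ((φ : ℂ) * Complex.I) * ω ^ s := by
    intro s
    simp only [z]
    rw [hω, ← Complex.exp_nat_mul, ← Complex.exp_add]
    congr 1
    rw [hφ]
    push_cast
    ring
  have hP : ∀ e, 1 ≤ e → e ≤ N + 1 → ∑ s ∈ Finset.range (N+2), z s ^ e = 0 := by
    intro e h1 h2
    have : ∀ s, z s ^ e = Complex.exp ((φ : ℂ) * Complex.I) ^ e * (ω ^ e) ^ s := by
      intro s; rw [hzs, mul_pow, ← pow_mul, ← pow_mul, mul_comm s e]
    simp only [this]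
    rw [← Finset.mul_sum]
    have hne : ω ^ e ≠ 1 := hprim.pow_ne_one_of_pos_of_lt (by omega) (by omega)
    have hg := mul_geom_sum (ω ^ e) (N+2)
    rw [← pow_mul, mul_comm e, pow_mul, hprim.pow_eq_one, one_pow, sub_self] at hg
    rcases mul_eq_zero.mp hg with h | h
    · exact absurd (sub_eq_zero.mp h) hne
    · rw [h, mul_zero]
  let w : ℕ → ℝ := fun s => 1 - Real.cos (((2 * s + 1 : ℕ) : ℝ) * φ) / Real.cos φ
  have hw : ∀ s, (w s : ℂ) = 1 - (z s + (z s)⁻¹) / (2 * Real.cos φ) := by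
    intro s
    have : (Real.cos (((2 * s + 1 : ℕ) : ℝ) * φ) : ℂ) = (z s + (z s)⁻¹) / 2 := by
      rw [Complex.ofReal_cos, Complex.cos]
      simp only [z]
      rw [← Complex.exp_neg]
      ring_nf
    simp only [w]
    push_cast [-Complex.ofReal_cos] at this ⊢
    rw [this]
    field_simp
  have hinv : ∑ s ∈ Finset.range (N+2), (z s)⁻¹ = 0 := by
    have h := congrArg conj (hP 1 le_rfl (by omega))
    simp only [pow_one, map_sum, map_zero] at h
    rw [← h]
    refine Finset.sum_congr rfl fun s _ => ?_
    rw [Complex.inv_eq_conj (hz1 s)]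
  have hgen : ∀ d, 1 ≤ d → ∑ s ∈ Finset.range (N+2), (w s : ℂ) * z s ^ d =
      ∑ s ∈ Finset.range (N+2), z s ^ d - (∑ s ∈ Finset.range (N+2), z s ^ (d+1) +
        ∑ s ∈ Finset.range (N+2), z s ^ (d-1)) / (2 * Real.cos φ) := by
    intro d hd
    obtain ⟨d, rfl⟩ : ∃ e, d = e + 1 := ⟨d - 1, by omega⟩
    rw [← Finset.sum_add_distrib, Finset.sum_div, ← Finset.sum_sub_distrib]
    refine Finset.sum_congr rfl fun s _ => ?_
    rw [hw, Nat.add_sub_cancel]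
    have := hz0 s
    field_simp
    ring
  refine ⟨z, w, hz1, ?_, ?_, ?_, ?_⟩
  · intro s hs
    simp only [w]
    rw [sub_nonneg, div_le_one hcos]
    have h1 : φ ≤ ((2 * s + 1 : ℕ) : ℝ) * φ := by
      have : (1:ℝ) ≤ ((2 * s + 1 : ℕ) : ℝ) := by exact_mod_cast (by omega)
      nlinarith
    have h2 : ((2 * s + 1 : ℕ) : ℝ) * φ ≤ 2 * Real.pi - φ := by
      have : ((2 * s + 1 : ℕ) : ℝ) + 1 ≤ 2 * ((N + 2 : ℕ) : ℝ) := by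
        exact_mod_cast (by omega)
      nlinarith
    rcases le_total (((2 * s + 1 : ℕ) : ℝ) * φ) Real.pi with h | h
    · exact Real.cos_le_cos_of_nonneg_of_le_pi hφ0.le h h1
    · rw [← Real.cos_two_pi_sub]
      exact Real.cos_le_cos_of_nonneg_of_le_pi hφ0.le (by linarith) (by linarith)
  · simp only [hw]
    rw [Finset.sum_sub_distrib, ← Finset.sum_div, Finset.sum_add_distrib, hinv]
    have := hP 1 le_rfl (by omega)
    simp only [pow_one] at this
    rw [this]
    simp
  · have h := hgen 1 le_rfl
    simp only [pow_one] at h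
    have h1 := hP 1 le_rfl (by omega)
    simp only [pow_one] at h1
    rw [h, h1, hP 2 (by omega) (by omega)]
    simp
    ring
  · intro d h1 h2
    rw [hgen d (by omega), hP d (by omega) (by omega), hP (d+1) (by omega) (by omega),
      hP (d-1) (by omega) (by omega)]
    simp

open ComplexConjugate in
lemma toeplitz_bound (N : ℕ) (hN : 1 ≤ N) (B : ℕ → ℕ → ℂ) (c g : ℝ)
    (h0 : ∀ i, B i i = c) (h1 : ∀ i, B i (i+1) = g)
    (hlt : ∀ i j, j < i → B i j = 0) (hgt : ∀ i j, i + N < j → B i j = 0)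
    (hpos : ∀ (M : ℕ) (z : ℂ), ‖z‖ = 1 →
      0 ≤ (∑ i ∈ Finset.range M, ∑ j ∈ Finset.range M, conj (z ^ i) * z ^ j * B i j).re) :
    g ≤ 2 * c * Real.cos (Real.pi / ((N + 2 : ℕ) : ℝ)) := by
  obtain ⟨z, w, hz, hw, e0, e1, e2⟩ := weight_sum N hN
  set C := Real.cos (Real.pi / ((N + 2 : ℕ) : ℝ)) with hC
  have hL : (0:ℝ) < ((N + 2 : ℕ) : ℝ) := by positivity
  have hCpos : 0 < C := by
    have hN' : (3:ℝ) ≤ ((N + 2 : ℕ) : ℝ) := by exact_mod_cast (by omega : 3 ≤ N + 2)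
    refine Real.cos_pos_of_mem_Ioo ⟨?_, ?_⟩
    · have : 0 < Real.pi / ((N + 2 : ℕ) : ℝ) := by positivity
      linarith [Real.pi_pos]
    · exact div_lt_div_of_pos_left Real.pi_pos (by norm_num) (by linarith)
  have hterm : ∀ i j, ∑ s ∈ Finset.range (N+2), (w s : ℂ) * (conj (z s ^ i) * z s ^ j * B i j) =
      (if j = i then (((N+2:ℕ):ℝ) * c : ℂ) else 0) +
        (if j = i + 1 then (-((N+2:ℕ):ℝ) * g / (2 * C) : ℂ) else 0) := by
    intro i j
    rcases lt_or_ge j i with h | h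
    · rw [if_neg (by omega), if_neg (by omega)]
      simp [hlt i j h]
    · obtain ⟨d, rfl⟩ := Nat.exists_eq_add_of_le h
      have hs : ∀ s, (w s : ℂ) * (conj (z s ^ i) * z s ^ (i+d) * B i (i+d)) =
          ((w s : ℂ) * z s ^ d) * B i (i+d) := by
        intro s
        have : conj (z s ^ i) * z s ^ i = 1 := by
          rw [Complex.conj_mul', norm_pow, hz]; simp
        rw [pow_add]
        linear_combination ((w s : ℂ) * z s ^ d * B i (i+d)) * this
      simp only [hs]
      rw [← Finset.sum_mul]
      rcases Nat.lt_or_ge N d with hd | hd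
      · rw [hgt i (i+d) (by omega), if_neg (by omega), if_neg (by omega)]; simp
      · match d, hd with
        | 0, _ =>
          simp only [pow_zero, mul_one, add_zero, if_true, h0]
          rw [e0, if_neg (by omega)]; simp
        | 1, _ =>
          simp only [pow_one, h1, if_true]
          rw [e1, if_neg (by omega)]
          push_cast
          ring
        | d+2, hd =>
          rw [e2 _ (by omega) hd, if_neg (by omega), if_neg (by omega)]; simp
  have main : ∀ M : ℕ, 0 ≤ ((M:ℝ)+1) * c - M * (g / (2 * C)) := by
    intro M
    have hp : 0 ≤ ∑ s ∈ Finset.range (N+2), w s *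
        (∑ i ∈ Finset.range (M+1), ∑ j ∈ Finset.range (M+1),
          conj (z s ^ i) * z s ^ j * B i j).re :=
      Finset.sum_nonneg fun s hs => mul_nonneg (hw s (Finset.mem_range.mp hs)) (hpos _ _ (hz s))
    have : ∑ s ∈ Finset.range (N+2), w s *
        (∑ i ∈ Finset.range (M+1), ∑ j ∈ Finset.range (M+1),
          conj (z s ^ i) * z s ^ j * B i j).re =
        (((((N+2:ℕ):ℝ) * (((M:ℝ)+1) * c - M * (g / (2 * C))) : ℝ)) : ℂ).re := by
      simp only [← Complex.re_ofReal_mul, ← Complex.re_sum]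
      congr 1
      simp only [Finset.mul_sum]
      rw [Finset.sum_comm]
      have : ∀ i ∈ Finset.range (M+1), ∑ s ∈ Finset.range (N+2), ∑ j ∈ Finset.range (M+1),
          (w s : ℂ) * (conj (z s ^ i) * z s ^ j * B i j) =
          (((N+2:ℕ):ℝ) * c : ℂ) + (if i < M then (-((N+2:ℕ):ℝ) * g / (2 * C) : ℂ) else 0) := by
        intro i hi
        rw [Finset.sum_comm]
        simp only [hterm, Finset.sum_add_distrib, Finset.sum_ite_eq']
        rw [if_pos hi]
        congr 1
        simp
      rw [Finset.sum_congr rfl this, Finset.sum_add_distrib, Finset.sum_range_succ (fun i => if i < M then (-((N+2:ℕ):ℝ) * g / (2 * C) : ℂ) else 0)]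
      have h7 : ∑ i ∈ Finset.range M, (if i < M then (-((N+2:ℕ):ℝ) * g / (2 * C) : ℂ) else 0) =
          ∑ i ∈ Finset.range M, (-((N+2:ℕ):ℝ) * g / (2 * C) : ℂ) :=
        Finset.sum_congr rfl fun i hi => if_pos (Finset.mem_range.mp hi)
      rw [h7, if_neg (lt_irrefl M)]
      simp only [Finset.sum_const, Finset.card_range, nsmul_eq_mul]
      push_cast
      ring
    rw [this, Complex.ofReal_re] at hp
    exact nonneg_of_mul_nonneg_right hp hL
  have hfin : g / (2 * C) ≤ c := by
    by_contra hcon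
    push Not at hcon
    obtain ⟨M, hM⟩ := exists_nat_gt (c / (g / (2*C) - c))
    rw [div_lt_iff₀ (by linarith)] at hM
    have := main M
    nlinarith
  rw [div_le_iff₀ (by positivity)] at hfin
  linarith

lemma fock_ext {n : ℕ} {A B : Fock n →L[ℂ] Fock n}
    (h : ∀ α, A (fockBasis n α) = B (fockBasis n α)) : A = B := by
  ext1 x
  have hx := lp.hasSum_single (p := 2) (by norm_num) x
  have hs : ∀ α, lp.single 2 α (x α) = x α • fockBasis n α := by
    intro α
    rw [fockBasis, ← lp.single_smul]; simp
  have hA := A.hasSum hx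
  have hB := B.hasSum hx
  refine hA.unique ?_
  convert hB using 2 with α
  simp only [hs, map_smul, h]

lemma fock_inner {n : ℕ} (α β : List (Fin n)) :
    inner ℂ (fockBasis n α) (fockBasis n β) = if α = β then 1 else 0 := by
  classical
  rw [fockBasis, fockBasis, lp.inner_single_left]
  simp [lp.single_apply, Pi.single_apply]

lemma fock_vec_ext {n : ℕ} {x y : Fock n}
    (h : ∀ α, inner ℂ (fockBasis n α) x = inner ℂ (fockBasis n α) y) : x = y := by
  ext α
  have := h α
  rw [fockBasis, lp.inner_single_left, lp.inner_single_left] at this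
  simpa using this

section
variable {n : ℕ} {S : Fin n → Fock n →L[ℂ] Fock n}

lemma S_inner (hS : ∀ (i : Fin n) (α : List (Fin n)), S i (fockBasis n α) = fockBasis n (i :: α))
    (i j : Fin n) (x y : Fock n) :
    inner ℂ (S i x) (S j y) = if i = j then inner ℂ x y else 0 := by
  have : (ContinuousLinearMap.adjoint (S i)) ∘L (S j) = if i = j then 1 else 0 := by
    apply fock_ext
    intro β
    apply fock_vec_ext
    intro α
    rw [ContinuousLinearMap.comp_apply, ContinuousLinearMap.adjoint_inner_right, hS, hS, fock_inner]
    by_cases h1 : i = j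
    · by_cases h2 : α = β
      · subst h1 h2
        rw [if_pos rfl, if_pos rfl, ContinuousLinearMap.one_apply, fock_inner, if_pos rfl]
      · rw [if_neg (by simp [h2]), if_pos h1, ContinuousLinearMap.one_apply, fock_inner, if_neg h2]
    · rw [if_neg (by simp [h1]), if_neg h1]; simp
  rw [← ContinuousLinearMap.adjoint_inner_right, ← ContinuousLinearMap.comp_apply, this]
  split_ifs <;> simp

lemma word_inner (hS : ∀ (i : Fin n) (α : List (Fin n)), S i (fockBasis n α) = fockBasis n (i :: α))
    (x y : Fock n) : ∀ (α β : List (Fin n)), α.length = β.length →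
    inner ℂ (wordProd S α x) (wordProd S β y) = if α = β then inner ℂ x y else 0
  | [], [], _ => by simp [wordProd]
  | [], _ :: _, h => by simp at h
  | _ :: _, [], h => by simp at h
  | i :: α, j :: β, h => by
    have ih := word_inner hS x y α β (by simpa using h)
    simp only [wordProd, List.map_cons, List.prod_cons, ContinuousLinearMap.mul_apply] at ih ⊢
    rw [S_inner hS, ih]
    by_cases h1 : i = j <;> by_cases h2 : α = β <;> simp [h1, h2]

noncomputable def Deg (n d : ℕ) : Submodule ℂ (Fock n) :=
  Submodule.span ℂ {x | ∃ α : List (Fin n), α.length = d ∧ x = fockBasis n α}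

lemma Deg_ortho {d e : ℕ} (h : d ≠ e) {x y : Fock n} (hx : x ∈ Deg n d) (hy : y ∈ Deg n e) :
    inner ℂ x y = 0 := by
  have : Deg n d ⟂ Deg n e := by
    unfold Deg
    rw [Submodule.isOrtho_span]
    rintro _ ⟨α, hα, rfl⟩ _ ⟨β, hβ, rfl⟩
    rw [fock_inner, if_neg]
    rintro rfl
    omega
  exact this.inner_eq hx hy

lemma S_deg (hS : ∀ (i : Fin n) (α : List (Fin n)), S i (fockBasis n α) = fockBasis n (i :: α))
    (i : Fin n) {d : ℕ} {x : Fock n} (hx : x ∈ Deg n d) : S i x ∈ Deg n (d+1) := by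
  have : Deg n d ≤ (Deg n (d+1)).comap (S i).toLinearMap := by
    conv_lhs => unfold Deg
    rw [Submodule.span_le]
    rintro _ ⟨α, hα, rfl⟩
    refine Submodule.subset_span ⟨i :: α, by simp [hα], ?_⟩
    exact hS i α
  exact this hx

lemma word_deg (hS : ∀ (i : Fin n) (α : List (Fin n)), S i (fockBasis n α) = fockBasis n (i :: α))
    {d : ℕ} {x : Fock n} (hx : x ∈ Deg n d) : ∀ α : List (Fin n),
      wordProd S α x ∈ Deg n (d + α.length)
  | [] => by simpa [wordProd] using hx
  | i :: α => by
    have ih := word_deg hS hx α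
    simp only [wordProd, List.map_cons, List.prod_cons, ContinuousLinearMap.mul_apply] at ih ⊢
    exact S_deg hS i ih

/-- homogeneous polynomial -/
noncomputable def homP (S : Fin n → Fock n →L[ℂ] Fock n) (k : ℕ) (b : (Fin k → Fin n) → ℂ) :
    Fock n →L[ℂ] Fock n := ∑ w : Fin k → Fin n, b w • wordProd S (List.ofFn w)

lemma homP_deg (hS : ∀ (i : Fin n) (α : List (Fin n)), S i (fockBasis n α) = fockBasis n (i :: α))
    {d k : ℕ} (b : (Fin k → Fin n) → ℂ) {x : Fock n} (hx : x ∈ Deg n d) :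
    homP S k b x ∈ Deg n (d + k) := by
  simp only [homP, ContinuousLinearMap.sum_apply, ContinuousLinearMap.smul_apply]
  refine Submodule.sum_mem _ fun w _ => Submodule.smul_mem _ _ ?_
  have := word_deg hS hx (List.ofFn w)
  rwa [List.length_ofFn] at this

open ComplexConjugate in
lemma homP_inner (hS : ∀ (i : Fin n) (α : List (Fin n)), S i (fockBasis n α) = fockBasis n (i :: α))
    {k : ℕ} (b c : (Fin k → Fin n) → ℂ) (x y : Fock n) :
    inner ℂ (homP S k b x) (homP S k c y) = (∑ w, conj (b w) * c w) * inner ℂ x y := by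
  simp only [homP, ContinuousLinearMap.sum_apply, ContinuousLinearMap.smul_apply, sum_inner,
    inner_sum, inner_smul_left, inner_smul_right, Finset.sum_mul]
  refine Finset.sum_congr rfl fun w _ => ?_
  rw [Finset.sum_eq_single w]
  · rw [word_inner hS _ _ _ _ rfl]; simp; ring
  · intro v _ hv
    rw [word_inner hS _ _ _ _ (by simp), if_neg]
    · simp
    · intro h; exact hv (List.ofFn_injective h).symm.symm
  · simp

open ComplexConjugate in
lemma coeff_bound (m : ℕ) (hm : 2 ≤ m)
    (a : List (Fin n) → ℂ) (ha_im : (a []).im = 0)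
    (hS : ∀ (i : Fin n) (α : List (Fin n)), S i (fockBasis n α) = fockBasis n (i :: α))
    (p : Fock n →L[ℂ] Fock n)
    (hp : p = ∑ k ∈ Finset.range m, homP S k (fun w => a (List.ofFn w)))
    (hre : ∀ x, 0 ≤ (inner ℂ x ((1 - p) x)).re) (k : ℕ) (hk : 1 ≤ k) (hkm : k ≤ m - 1) :
    Real.sqrt (∑ w : Fin k → Fin n, ‖a (List.ofFn w)‖ ^ 2) ≤
      2 * (1 - (a []).re) * Real.cos (Real.pi / (((m - 1) / k + 2 : ℕ) : ℝ)) := by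
  set A := Real.sqrt (∑ w : Fin k → Fin n, ‖a (List.ofFn w)‖ ^ 2) with hA
  have hA2 : A ^ 2 = ∑ w : Fin k → Fin n, ‖a (List.ofFn w)‖ ^ 2 :=
    Real.sq_sqrt (Finset.sum_nonneg fun _ _ => by positivity)
  have hN : 1 ≤ (m-1)/k := (Nat.one_le_div_iff (by omega)).mpr hkm
  have he : fockBasis n [] ∈ Deg n 0 := Submodule.subset_span ⟨[], rfl, rfl⟩
  have hin : ∀ (d e : ℕ) (x y : Fock n), x ∈ Deg n d → y ∈ Deg n e →
      inner ℂ y ((1-p) x) = inner ℂ y x - ∑ r ∈ Finset.range m,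
        (if d + r = e then inner ℂ y (homP S r (fun w => a (List.ofFn w)) x) else 0) := by
    intro d e x y hx hy
    rw [ContinuousLinearMap.sub_apply, inner_sub_right, hp]
    simp only [ContinuousLinearMap.sum_apply, inner_sum, ContinuousLinearMap.one_apply]
    congr 1
    refine Finset.sum_congr rfl fun r _ => ?_
    split_ifs with h
    · rfl
    · exact Deg_ortho (Ne.symm h) hy (homP_deg hS _ hx)
  have ha0 : ((a []).re : ℂ) = a [] := by
    apply Complex.ext <;> simp [ha_im]
  have hdiag : ∀ (d : ℕ) (x : Fock n), x ∈ Deg n d → inner ℂ x x = (1:ℂ) →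
      inner ℂ x ((1-p) x) = ((1 - (a []).re : ℝ) : ℂ) := by
    intro d x hx h1
    rw [hin d d x x hx hx, h1]
    simp only [Nat.add_eq_left, Finset.sum_ite_eq']
    rw [if_pos (by simp; omega)]
    have h3 : homP S 0 (fun w => a (List.ofFn w)) x = a [] • x := by
      simp [homP, wordProd]
    rw [h3, inner_smul_right, h1, ← ha0]
    simp
  have he1 : inner ℂ (fockBasis n []) (fockBasis n []) = (1:ℂ) := by rw [fock_inner, if_pos rfl]
  have hc : 0 ≤ 1 - (a []).re := by
    have := hre (fockBasis n [])
    rwa [hdiag 0 _ he he1, Complex.ofReal_re] at this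
  rcases (Real.sqrt_nonneg (∑ w : Fin k → Fin n, ‖a (List.ofFn w)‖ ^ 2)).eq_or_lt' with hz | hz
  · rw [hA, hz]
    have hN' : (3:ℝ) ≤ (((m-1)/k + 2 : ℕ) : ℝ) := by exact_mod_cast (by omega : 3 ≤ (m-1)/k + 2)
    have : 0 ≤ Real.cos (Real.pi / (((m - 1) / k + 2 : ℕ) : ℝ)) := by
      refine Real.cos_nonneg_of_mem_Icc ⟨?_, ?_⟩
      · have : 0 < Real.pi / (((m-1)/k + 2 : ℕ) : ℝ) := by positivity
        linarith [Real.pi_pos]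
      · exact div_le_div_of_nonneg_left Real.pi_pos.le (by norm_num) (by linarith)
    positivity
  rw [← hA] at hz
  have hAC : (A : ℂ) ≠ 0 := by exact_mod_cast hz.ne'
  have hA2C : ∑ w : Fin k → Fin n, conj (a (List.ofFn w)) * a (List.ofFn w) = (A:ℂ) ^ 2 := by
    simp only [Complex.conj_mul']
    exact_mod_cast hA2.symm
  let u : (Fin k → Fin n) → ℂ := fun w => - a (List.ofFn w) / A
  let V := homP S k u
  have huu : ∑ w, conj (u w) * u w = 1 := by
    have : ∀ w, conj (u w) * u w = conj (a (List.ofFn w)) * a (List.ofFn w) / (A:ℂ)^2 := by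
      intro w; simp only [u]; simp; field_simp
    simp only [this]
    rw [← Finset.sum_div, hA2C]; field_simp
  have hua : ∑ w, conj (u w) * a (List.ofFn w) = - A := by
    have : ∀ w, conj (u w) * a (List.ofFn w) = -(conj (a (List.ofFn w)) * a (List.ofFn w)) / (A:ℂ) := by
      intro w; simp only [u]; simp; field_simp
    simp only [this]
    rw [← Finset.sum_div, Finset.sum_neg_distrib, hA2C]; field_simp
  let ξ : ℕ → Fock n := fun i => (V ^ i) (fockBasis n [])
  have hξs : ∀ i, ξ (i+1) = V (ξ i) := by
    intro i; simp only [ξ, pow_succ', ContinuousLinearMap.mul_apply]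
  have hξd : ∀ i, ξ i ∈ Deg n (i * k) := by
    intro i
    induction i with
    | zero => simpa [ξ] using he
    | succ i ih => rw [hξs, Nat.succ_mul]; exact homP_deg hS _ ih
  have hξ1 : ∀ i, inner ℂ (ξ i) (ξ i) = (1:ℂ) := by
    intro i
    induction i with
    | zero => simpa [ξ] using he1
    | succ i ih => rw [hξs, homP_inner hS, huu, ih, one_mul]
  refine toeplitz_bound ((m-1)/k) hN (fun i j => inner ℂ (ξ j) ((1-p) (ξ i))) (1 - (a []).re) A
    ?_ ?_ ?_ ?_ ?_
  · intro i
    exact hdiag _ _ (hξd i) (hξ1 i)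
  · intro i
    rw [hin _ _ _ _ (hξd i) (hξd (i+1)), Deg_ortho _ (hξd (i+1)) (hξd i), Nat.succ_mul]
    · simp only [Nat.add_left_cancel_iff, Finset.sum_ite_eq']
      rw [if_pos (by simp; omega), hξs, homP_inner hS, hua, hξ1]
      simp
    · rw [Nat.succ_mul]; omega
  · intro i j h
    have : j * k < i * k := Nat.mul_lt_mul_of_pos_right h (by omega)
    rw [hin _ _ _ _ (hξd i) (hξd j), Deg_ortho this.ne (hξd j) (hξd i), Finset.sum_eq_zero]
    · simp
    · intro r _; rw [if_neg (by omega)]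
  · intro i j h
    have h2 : i * k + m ≤ j * k := by
      have h3 : (i + (m-1)/k + 1) * k ≤ j * k := Nat.mul_le_mul_right _ h
      have h4 := Nat.div_add_mod (m-1) k
      have h5 := Nat.mod_lt (m-1) (show k > 0 by omega)
      have h6 : (i + (m-1)/k + 1) * k = i * k + k * ((m-1)/k) + k := by ring
      omega
    rw [hin _ _ _ _ (hξd i) (hξd j), Deg_ortho (by omega) (hξd j) (hξd i), Finset.sum_eq_zero]
    · simp
    · intro r hr; rw [Finset.mem_range] at hr; rw [if_neg (by omega)]
  · intro M z hz1
    have := hre (∑ i ∈ Finset.range M, conj (z ^ i) • ξ i)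
    convert this using 2
    simp only [map_sum, map_smul, inner_sum, sum_inner, inner_smul_left, inner_smul_right,
      Finset.mul_sum]
    refine Finset.sum_congr rfl fun i _ => ?_
    refine Finset.sum_congr rfl fun j _ => ?_
    rw [Complex.conj_conj]
    ring
end

section
variable {K : Type} [NormedAddCommGroup K] [InnerProductSpace ℂ K] [CompleteSpace K] {n : ℕ}

lemma row_sq (T : Fin n → K →L[ℂ] K) (t : ℝ) (ht : 0 ≤ t)
    (hT : Real.sqrt ‖∑ i, T i * ContinuousLinearMap.adjoint (T i)‖ ≤ t) (y : K) :
    ∑ i, ‖ContinuousLinearMap.adjoint (T i) y‖ ^ 2 ≤ t ^ 2 * ‖y‖ ^ 2 := by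
  have h1 : ‖∑ i, T i * ContinuousLinearMap.adjoint (T i)‖ ≤ t ^ 2 := (Real.sqrt_le_left ht).mp hT
  have h2 : ((∑ i, ‖ContinuousLinearMap.adjoint (T i) y‖ ^ 2 : ℝ) : ℂ) =
      inner ℂ y ((∑ i, T i * ContinuousLinearMap.adjoint (T i)) y) := by
    simp only [ContinuousLinearMap.sum_apply, inner_sum, ContinuousLinearMap.mul_apply]
    push_cast
    refine Finset.sum_congr rfl fun i _ => ?_
    rw [← ContinuousLinearMap.adjoint_inner_left, inner_self_eq_norm_sq_to_K]
    rfl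
  have h3 : ‖((∑ i, ‖ContinuousLinearMap.adjoint (T i) y‖ ^ 2 : ℝ) : ℂ)‖ ≤ t ^ 2 * ‖y‖ ^ 2 := by
    rw [h2]
    calc _ ≤ ‖y‖ * ‖(∑ i, T i * ContinuousLinearMap.adjoint (T i)) y‖ := norm_inner_le_norm _ _
      _ ≤ ‖y‖ * (t ^ 2 * ‖y‖) := by
        gcongr
        exact (ContinuousLinearMap.le_opNorm _ _).trans (by gcongr)
      _ = _ := by ring
  rw [Complex.norm_real] at h3
  exact (le_abs_self _).trans h3

lemma row_pow (T : Fin n → K →L[ℂ] K) (t : ℝ) (ht : 0 ≤ t)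
    (hT : Real.sqrt ‖∑ i, T i * ContinuousLinearMap.adjoint (T i)‖ ≤ t) (k : ℕ) : ∀ (y : K),
    ∑ w : Fin k → Fin n, ‖ContinuousLinearMap.adjoint (wordProd T (List.ofFn w)) y‖ ^ 2
      ≤ (t ^ k) ^ 2 * ‖y‖ ^ 2 := by
  induction k with
  | zero =>
    intro y
    have h1 : ContinuousLinearMap.adjoint (1 : K →L[ℂ] K) = 1 := by
      rw [← ContinuousLinearMap.star_eq_adjoint, star_one]
    simp [wordProd, h1]
  | succ k ih =>
    intro y
    rw [← (Fin.consEquiv (fun _ => Fin n)).sum_comp, Fintype.sum_prod_type]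
    calc _ = ∑ i, ∑ w : Fin k → Fin n, ‖ContinuousLinearMap.adjoint (wordProd T (List.ofFn w))
              (ContinuousLinearMap.adjoint (T i) y)‖ ^ 2 := by
          refine Finset.sum_congr rfl fun i _ => Finset.sum_congr rfl fun w _ => ?_
          rw [show (Fin.consEquiv (fun _ => Fin n)) (i, w) = Fin.cons i w from rfl]
          simp only [List.ofFn_cons, wordProd, List.map_cons, List.prod_cons,
            ContinuousLinearMap.mul_def, ContinuousLinearMap.adjoint_comp,
            ContinuousLinearMap.comp_apply]
      _ ≤ ∑ i, (t ^ k) ^ 2 * ‖ContinuousLinearMap.adjoint (T i) y‖ ^ 2 :=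
          Finset.sum_le_sum fun i _ => ih _
      _ ≤ (t ^ k) ^ 2 * (t ^ 2 * ‖y‖ ^ 2) := by
          rw [← Finset.mul_sum]
          gcongr
          exact row_sq T t ht hT y
      _ = _ := by ring

lemma row_bound (T : Fin n → K →L[ℂ] K) (t : ℝ) (ht : 0 ≤ t)
    (hT : Real.sqrt ‖∑ i, T i * ContinuousLinearMap.adjoint (T i)‖ ≤ t) (k : ℕ)
    (b : (Fin k → Fin n) → ℝ) :
    ‖∑ w : Fin k → Fin n, ((b w : ℝ) : ℂ) • wordProd T (List.ofFn w)‖ ≤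
      Real.sqrt (∑ w, b w ^ 2) * t ^ k := by
  rw [← (ContinuousLinearMap.adjoint (𝕜 := ℂ) (E := K) (F := K)).norm_map]
  refine ContinuousLinearMap.opNorm_le_bound _ (by positivity) fun y => ?_
  simp only [map_sum, ContinuousLinearMap.sum_apply, map_smulₛₗ, ContinuousLinearMap.smul_apply]
  calc _ ≤ ∑ w : Fin k → Fin n, |b w| * ‖ContinuousLinearMap.adjoint (wordProd T (List.ofFn w)) y‖ := by
        refine (norm_sum_le _ _).trans (Finset.sum_le_sum fun w _ => ?_)
        rw [norm_smul]; simp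
    _ ≤ Real.sqrt (∑ w, |b w| ^ 2) * Real.sqrt (∑ w : Fin k → Fin n,
          ‖ContinuousLinearMap.adjoint (wordProd T (List.ofFn w)) y‖ ^ 2) :=
        Real.sum_mul_le_sqrt_mul_sqrt _ _ _
    _ ≤ Real.sqrt (∑ w, b w ^ 2) * (t ^ k * ‖y‖) := by
        simp only [sq_abs]
        gcongr
        apply Real.sqrt_le_iff.mpr ⟨by positivity, ?_⟩
        rw [mul_pow]
        exact row_pow T t ht hT k y
    _ = _ := by ring
end

theorem stmt_4 (n : ℕ) (hn : 1 ≤ n) (m : ℕ) (hm : 2 ≤ m)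
    (a : List (Fin n) → ℂ) (ha_im : (a []).im = 0) (ha_nonneg : 0 ≤ (a []).re)
    (S : Fin n → Fock n →L[ℂ] Fock n)
    (hS : ∀ (i : Fin n) (α : List (Fin n)), S i (fockBasis n α) = fockBasis n (i :: α))
    (p : Fock n →L[ℂ] Fock n)
    (hp : p = ∑ k ∈ Finset.range m, ∑ w : Fin k → Fin n,
      a (List.ofFn w) • wordProd S (List.ofFn w))
    (hre : (2 : ℂ)⁻¹ • (p + ContinuousLinearMap.adjoint p) ≤ 1)
    (t : ℝ) (htm : t ∈ Set.Ioc (0 : ℝ) 1) (hts : fm m t = 1 / 2) :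
    ∀ (K : Type) [NormedAddCommGroup K] [InnerProductSpace ℂ K] [CompleteSpace K],
      ∀ T : Fin n → K →L[ℂ] K,
        Real.sqrt ‖∑ i, T i * ContinuousLinearMap.adjoint (T i)‖ ≤ t →
        ∑ k ∈ Finset.range m, ‖∑ w : Fin k → Fin n,
          ((‖a (List.ofFn w)‖ : ℂ)) • wordProd T (List.ofFn w)‖ ≤ 1 := by
  intro K _ _ _ T hT
  have ht : 0 ≤ t := htm.1.le
  have hre' : ∀ x, 0 ≤ (inner ℂ x ((1 - p) x)).re := by
    intro x
    have h := ((ContinuousLinearMap.le_def _ _).mp hre).re_inner_nonneg_right x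
    simp only [ContinuousLinearMap.sub_apply, ContinuousLinearMap.smul_apply,
      ContinuousLinearMap.add_apply, inner_sub_right, inner_smul_right, inner_add_right,
      ContinuousLinearMap.adjoint_inner_right] at h ⊢
    rw [← inner_conj_symm (p x) x] at h
    have h2 : (2:ℂ)⁻¹ = ((2⁻¹ : ℝ) : ℂ) := by push_cast; rfl
    simp only [h2, RCLike.re_to_complex, Complex.sub_re, Complex.re_ofReal_mul, Complex.add_re,
      Complex.conj_re] at h ⊢
    linarith
  have hco := coeff_bound m hm a ha_im hS p hp hre'
  have hrow := fun k => row_bound T t ht hT k (fun w => ‖a (List.ofFn w)‖)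
  obtain ⟨M, rfl⟩ : ∃ M, m = M + 1 := ⟨m - 1, by omega⟩
  rw [Finset.sum_range_succ']
  have h0 := hrow 0
  have h0' : Real.sqrt (∑ w : Fin 0 → Fin n, ‖a (List.ofFn w)‖ ^ 2) * t ^ 0 = (a []).re := by
    have : a [] = ((a []).re : ℂ) := by apply Complex.ext <;> simp [ha_im]
    simp
    rw [this, Complex.norm_real, Real.norm_of_nonneg ha_nonneg, Complex.ofReal_re]
  rw [h0'] at h0
  have hs : ∑ k ∈ Finset.range M, ‖∑ w : Fin (k+1) → Fin n,
      ((‖a (List.ofFn w)‖ : ℂ)) • wordProd T (List.ofFn w)‖ ≤ 2 * (1 - (a []).re) * fm (M+1) t := by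
    rw [fm, Finset.mul_sum, Nat.add_sub_cancel, ← Finset.Ico_add_one_right_eq_Icc,
      Finset.sum_Ico_eq_sum_range]
    refine Finset.sum_le_sum fun k hk => ?_
    rw [Finset.mem_range] at hk
    refine (hrow (k+1)).trans ?_
    have := hco (k+1) (by omega) (by omega)
    rw [add_comm 1 k]
    calc _ ≤ _ := mul_le_mul_of_nonneg_right this (pow_nonneg ht _)
      _ = _ := by simp only [Nat.add_sub_cancel]; ring
  rw [hts] at hs
  calc _ ≤ _ := add_le_add hs h0
    _ = 1 := by ring
end

section
/- Let (a_k)_{k≥0} be complex numbers with limsup_{k→∞} |a_k|^{1/k} ≤ 1 and let f(z) = ∑_{k=0}^∞ a_k z^k for z ∈ 𝔻. Then Re f(z) ≤ 1 for all z ∈ 𝔻 if and only if for every r ∈ [0,1) the operator f(rS) := ∑_{k=0}^∞ r^k a_k S^k (which converges in operator norm) satisfies Re f(rS) ≤ I. Moreover, if a_k = 0 for all but finitely many k (so that f is a polynomial p), then Re p(z) ≤ 1 for all z ∈ 𝔻 if and only if Re p(S) ≤ I. -/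
open scoped BigOperators

/-- `ℓ²(ℕ)` with complex coefficients. -/
noncomputable abbrev l2N : Type := lp (fun _ : ℕ => ℂ) 2

open MeasureTheory Filter Topology ComplexConjugate

lemma aux_order (T : l2N →L[ℂ] l2N) :
    (2 : ℂ)⁻¹ • (T + ContinuousLinearMap.adjoint T) ≤ 1 ↔
      ∀ x : l2N, (inner ℂ x (T x)).re ≤ ‖x‖ ^ 2 := by
  have key : ∀ x : l2N, (1 - (2 : ℂ)⁻¹ • (T + ContinuousLinearMap.adjoint T)).reApplyInnerSelf x
      = ‖x‖ ^ 2 - (inner ℂ x (T x)).re := by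
    intro x
    rw [ContinuousLinearMap.reApplyInnerSelf_apply]
    have h1 : inner ℂ (T x) x = conj (inner ℂ x (T x)) := (inner_conj_symm _ _).symm
    have h2 : inner ℂ x x = ((‖x‖ ^ 2 : ℝ) : ℂ) := by
      rw [inner_self_eq_norm_sq_to_K]; norm_cast
    simp only [sub_apply, one_apply_eq_self,
      smul_apply, add_apply, inner_sub_left,
      inner_smul_left, inner_add_left, ContinuousLinearMap.adjoint_inner_left]
    rw [h1, h2]
    have h3 : conj ((2 : ℂ)⁻¹) = ((2⁻¹ : ℝ) : ℂ) := by
      rw [map_inv₀, map_ofNat]; simp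
    rw [h3, RCLike.re_to_complex, Complex.sub_re, Complex.ofReal_re, Complex.re_ofReal_mul,
      Complex.add_re, Complex.conj_re]
    ring
  rw [ContinuousLinearMap.le_def, ContinuousLinearMap.isPositive_def']
  constructor
  · rintro ⟨_, h⟩ x
    have := h x
    rw [key] at this
    linarith
  · intro h
    refine ⟨?_, fun x => ?_⟩
    · refine (IsSelfAdjoint.one _).sub ?_
      rw [← ContinuousLinearMap.star_eq_adjoint]
      refine IsSelfAdjoint.smul ?_ (IsSelfAdjoint.add_star_self T)
      rw [isSelfAdjoint_iff, star_inv₀]; simp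
    · rw [key]
      linarith [h x]

lemma aux_hs (x y : l2N) : HasSum (fun n : ℕ => conj (x n) * y n) (inner ℂ x y) := by
  have h := lp.hasSum_inner (𝕜 := ℂ) x y
  simp only [RCLike.inner_apply'] at h
  exact h

section shift
lemma aux_norm (S : l2N →L[ℂ] l2N) (hS0 : ∀ x : l2N, (S x) 0 = 0)
    (hS1 : ∀ (x : l2N) (k : ℕ), (S x) (k + 1) = x k)
    (x : l2N) : ‖S x‖ = ‖x‖ := by
  have h : inner ℂ (S x) (S x) = inner ℂ x x := by
    rw [← (aux_hs (S x) (S x)).tsum_eq, ← (aux_hs x x).tsum_eq,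
      (aux_hs (S x) (S x)).summable.tsum_eq_zero_add]
    simp only [hS0, hS1, mul_zero, zero_add]
  rw [inner_self_eq_norm_sq_to_K, inner_self_eq_norm_sq_to_K] at h
  have h' : ‖S x‖ ^ 2 = ‖x‖ ^ 2 := by exact_mod_cast h
  exact (sq_eq_sq₀ (norm_nonneg _) (norm_nonneg _)).1 h'

lemma aux_norm_pow (S : l2N →L[ℂ] l2N) (hS0 : ∀ x : l2N, (S x) 0 = 0)
    (hS1 : ∀ (x : l2N) (k : ℕ), (S x) (k + 1) = x k)
    (k : ℕ) (x : l2N) : ‖(S ^ k) x‖ = ‖x‖ := by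
  induction k with
  | zero => simp
  | succ k ih =>
    rw [pow_succ', mul_apply_eq_comp, aux_norm S hS0 hS1, ih]

lemma aux_opnorm (S : l2N →L[ℂ] l2N) (hS0 : ∀ x : l2N, (S x) 0 = 0)
    (hS1 : ∀ (x : l2N) (k : ℕ), (S x) (k + 1) = x k)
    (k : ℕ) : ‖S ^ k‖ = 1 := by
  apply le_antisymm
  · refine ContinuousLinearMap.opNorm_le_bound _ zero_le_one fun x => ?_
    rw [aux_norm_pow S hS0 hS1, one_mul]
  · have := (S ^ k).le_opNorm (lp.single 2 0 (1 : ℂ) : l2N)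
    rw [aux_norm_pow S hS0 hS1, lp.norm_single (by norm_num)] at this
    simpa using this

lemma aux_single (S : l2N →L[ℂ] l2N) (hS0 : ∀ x : l2N, (S x) 0 = 0)
    (hS1 : ∀ (x : l2N) (k : ℕ), (S x) (k + 1) = x k)
    (k i : ℕ) (c : ℂ) :
    (S ^ k) (lp.single 2 i c : l2N) = (lp.single 2 (i + k) c : l2N) := by
  induction k with
  | zero => simp
  | succ k ih =>
    rw [pow_succ', mul_apply_eq_comp, ih]
    ext n
    cases n with
    | zero => rw [hS0, lp.single_apply_ne]; omega
    | succ n =>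
      rw [hS1, lp.single_apply, lp.single_apply]
      simp only [Pi.single_apply]
      congr 1
      simp only [eq_iff_iff]; omega

lemma aux_pow_apply (S : l2N →L[ℂ] l2N) (hS0 : ∀ x : l2N, (S x) 0 = 0)
    (hS1 : ∀ (x : l2N) (k : ℕ), (S x) (k + 1) = x k)
    (k n : ℕ) (x : l2N) : ((S ^ k) x) (n + k) = x n := by
  induction k with
  | zero => simp
  | succ k ih =>
    rw [pow_succ', mul_apply_eq_comp, ← add_assoc, hS1, ih]

lemma aux_pow_apply_lt (S : l2N →L[ℂ] l2N) (hS0 : ∀ x : l2N, (S x) 0 = 0)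
    (hS1 : ∀ (x : l2N) (k : ℕ), (S x) (k + 1) = x k)
    (k n : ℕ) (h : n < k) (x : l2N) : ((S ^ k) x) n = 0 := by
  induction k generalizing n with
  | zero => omega
  | succ k ih =>
    rw [pow_succ', mul_apply_eq_comp]
    cases n with
    | zero => exact hS0 _
    | succ n => rw [hS1, ih n (by omega)]

lemma aux_summable (S : l2N →L[ℂ] l2N) (hS0 : ∀ x : l2N, (S x) 0 = 0)
    (hS1 : ∀ (x : l2N) (k : ℕ), (S x) (k + 1) = x k)
    (b : ℕ → ℂ) (hb : Summable fun k => ‖b k‖) :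
    Summable fun k => b k • S ^ k := by
  apply Summable.of_norm
  simpa [norm_smul, aux_opnorm S hS0 hS1] using hb

lemma aux_hasSum (S : l2N →L[ℂ] l2N) (hS0 : ∀ x : l2N, (S x) 0 = 0)
    (hS1 : ∀ (x : l2N) (k : ℕ), (S x) (k + 1) = x k)
    (b : ℕ → ℂ) (hb : Summable fun k => ‖b k‖) (x y : l2N) :
    HasSum (fun k => b k * inner ℂ x ((S ^ k) y)) (inner ℂ x ((∑' k, b k • S ^ k) y)) := by
  have h := (aux_summable S hS0 hS1 b hb).hasSum
  have h2 := (ContinuousLinearMap.apply ℂ l2N y).hasSum h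
  have h3 := (innerSL ℂ x).hasSum h2
  simpa [Function.comp_def, inner_smul_right] using h3

lemma aux_geom_mem (z : ℂ) (hz : ‖z‖ < 1) : Memℓp (fun n : ℕ => z ^ n) 2 := by
  apply memℓp_gen
  have : Summable fun n : ℕ => (‖z‖ ^ 2) ^ n :=
    summable_geometric_of_lt_one (by positivity) (by nlinarith [norm_nonneg z])
  refine this.congr fun n => ?_
  simp [← pow_mul, mul_comm]

lemma aux_easy (S : l2N →L[ℂ] l2N) (hS0 : ∀ x : l2N, (S x) 0 = 0)
    (hS1 : ∀ (x : l2N) (k : ℕ), (S x) (k + 1) = x k)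
    (b : ℕ → ℂ) (hb : Summable fun k => ‖b k‖)
    (h : ∀ x : l2N, (inner ℂ x ((∑' k, b k • S ^ k) x)).re ≤ ‖x‖ ^ 2)
    (z : ℂ) (hz : ‖z‖ < 1) : (∑' k, b k * z ^ k).re ≤ 1 := by
  have hz' : ‖conj z‖ < 1 := by simpa using hz
  set x : l2N := ⟨fun n => (conj z) ^ n, aux_geom_mem _ hz'⟩ with hx
  have hxa : ∀ n, x n = (conj z) ^ n := fun n => rfl
  have hk : ∀ k, inner ℂ x ((S ^ k) x) = z ^ k * inner ℂ x x := by
    intro k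
    rw [← (aux_hs x ((S ^ k) x)).tsum_eq, ← (aux_hs x x).tsum_eq,
      ← (aux_hs x ((S ^ k) x)).summable.sum_add_tsum_nat_add k, ← tsum_mul_left]
    rw [Finset.sum_eq_zero, zero_add]
    · congr 1
      ext n
      rw [aux_pow_apply S hS0 hS1, hxa (n + k)]
      rw [hxa, map_pow, map_pow, Complex.conj_conj]
      ring
    · intro n hn
      rw [aux_pow_apply_lt S hS0 hS1 k n (Finset.mem_range.1 hn), mul_zero]
  have hs := aux_hasSum S hS0 hS1 b hb x x
  have h2 : inner ℂ x x = ((‖x‖ ^ 2 : ℝ) : ℂ) := by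
    rw [inner_self_eq_norm_sq_to_K]; norm_cast
  have e : inner ℂ x ((∑' k, b k • S ^ k) x) = (∑' k, b k * z ^ k) * ((‖x‖ ^ 2 : ℝ) : ℂ) := by
    rw [← hs.tsum_eq, ← tsum_mul_right]
    congr 1
    ext k
    rw [hk, h2]; ring
  have hh := h x
  rw [e, Complex.re_mul_ofReal] at hh
  have hpos : 0 < ‖x‖ ^ 2 := by
    have : x ≠ 0 := by
      intro h0
      have := hxa 0
      rw [h0] at this
      simp at this
    positivity
  by_contra hc
  push Not at hc
  nlinarith

lemma aux_boundary (b : ℕ → ℂ) (hb : Summable fun k => ‖b k‖)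
    (h : ∀ z : ℂ, ‖z‖ < 1 → (∑' k, b k * z ^ k).re ≤ 1) (z : ℂ) (hz : ‖z‖ ≤ 1) :
    (∑' k, b k * z ^ k).re ≤ 1 := by
  have hc : ContinuousOn (fun r : ℝ => (∑' k, b k * ((r : ℂ) * z) ^ k).re) (Set.Icc 0 1) := by
    apply Complex.continuous_re.comp_continuousOn
    refine continuousOn_tsum (u := fun k => ‖b k‖) (fun k => by fun_prop) hb ?_
    intro k r hr
    rw [norm_mul, norm_pow, norm_mul, Complex.norm_real, Real.norm_of_nonneg hr.1]
    have : (r * ‖z‖) ^ k ≤ 1 := pow_le_one₀ (mul_nonneg hr.1 (norm_nonneg _))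
      (mul_le_one₀ hr.2 (norm_nonneg _) hz)
    nlinarith [norm_nonneg (b k)]
  have ht : Tendsto (fun r : ℝ => (∑' k, b k * ((r : ℂ) * z) ^ k).re) (𝓝[Set.Ico 0 1] 1)
      (𝓝 (∑' k, b k * (((1 : ℝ) : ℂ) * z) ^ k).re) :=
    (hc 1 (by simp)).mono_left (nhdsWithin_mono _ Set.Ico_subset_Icc_self)
  have : (𝓝[Set.Ico (0 : ℝ) 1] 1).NeBot := by
    rw [← mem_closure_iff_nhdsWithin_neBot, closure_Ico (by norm_num)]
    simp
  have := le_of_tendsto ht (b := 1) (by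
    filter_upwards [self_mem_nhdsWithin] with r hr
    apply h
    rw [norm_mul, Complex.norm_real, Real.norm_of_nonneg hr.1]
    nlinarith [hr.1, hr.2, norm_nonneg z])
  simpa using this

local instance : Fact (0 < (1 : ℝ)) := ⟨one_pos⟩

lemma aux_int (n : ℤ) : ∫ t : AddCircle (1 : ℝ), fourier n t ∂AddCircle.haarAddCircle
    = if n = 0 then 1 else 0 := by
  split_ifs with h
  · simp [h]
  · exact integral_eq_zero_of_add_right_eq_neg (μ := AddCircle.haarAddCircle)
      (fourier_add_half_inv_index h one_pos)

lemma aux_integrable (f : AddCircle (1 : ℝ) → ℂ) (hf : Continuous f) :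
    Integrable f AddCircle.haarAddCircle :=
  (ContinuousMap.mk f hf).continuous.integrable_of_hasCompactSupport
    (HasCompactSupport.of_compactSpace _)

lemma aux_fin_inner (S : l2N →L[ℂ] l2N) (hS0 : ∀ x : l2N, (S x) 0 = 0)
    (hS1 : ∀ (x : l2N) (k : ℕ), (S x) (k + 1) = x k)
    (s : Finset ℕ) (c : ℕ → ℂ) (k : ℕ) :
    inner ℂ (∑ i ∈ s, (lp.single 2 i (c i) : l2N)) ((S ^ k) (∑ i ∈ s, (lp.single 2 i (c i) : l2N)))
     = ∫ t : AddCircle (1 : ℝ), conj (∑ i ∈ s, c i * fourier (i : ℤ) t) *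
        (∑ i ∈ s, c i * fourier (i : ℤ) t) * fourier (k : ℤ) t ∂AddCircle.haarAddCircle := by
  have e : ∀ t : AddCircle (1 : ℝ), conj (∑ i ∈ s, c i * fourier (i : ℤ) t) *
        (∑ i ∈ s, c i * fourier (i : ℤ) t) * fourier (k : ℤ) t
      = ∑ i ∈ s, ∑ j ∈ s, (conj (c i) * c j) * fourier (-(i : ℤ) + j + k) t := by
    intro t
    rw [map_sum, Finset.sum_mul_sum, Finset.sum_mul]
    refine Finset.sum_congr rfl fun i _ => ?_
    rw [Finset.sum_mul]
    refine Finset.sum_congr rfl fun j _ => ?_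
    rw [fourier_add, fourier_add, fourier_neg, map_mul]
    ring
  simp_rw [e]
  rw [integral_finsetSum _ (fun i _ => aux_integrable _ (by fun_prop)), map_sum, sum_inner]
  refine Finset.sum_congr rfl fun i _ => ?_
  rw [integral_finsetSum _ (fun i _ => aux_integrable _ (by fun_prop)), inner_sum]
  refine Finset.sum_congr rfl fun j _ => ?_
  rw [integral_const_mul, aux_int, aux_single S hS0 hS1, lp.inner_single_left, lp.single_apply,
    Pi.single_apply]
  by_cases h : i = j + k
  · rw [if_pos h, if_pos (by omega)]
    simp [mul_comm]
  · rw [if_neg h, if_neg (by omega)]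
    simp

lemma aux_fin (S : l2N →L[ℂ] l2N) (hS0 : ∀ x : l2N, (S x) 0 = 0)
    (hS1 : ∀ (x : l2N) (k : ℕ), (S x) (k + 1) = x k)
    (b : ℕ → ℂ) (hb : Summable fun k => ‖b k‖)
    (h : ∀ z : ℂ, ‖z‖ ≤ 1 → (∑' k, b k * z ^ k).re ≤ 1) (s : Finset ℕ) (c : ℕ → ℂ) (x : l2N)
    (hx : x = ∑ i ∈ s, (lp.single 2 i (c i) : l2N)) :
    (inner ℂ x ((∑' k, b k • S ^ k) x)).re ≤ ‖x‖ ^ 2 := by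
  set X : C(AddCircle (1 : ℝ), ℂ) := ∑ i ∈ s, c i • fourier (i : ℤ) with hX
  have hXa : ∀ t, X t = ∑ i ∈ s, c i * fourier (i : ℤ) t := by
    intro t; simp [hX, ContinuousMap.sum_apply]
  have hk : ∀ k : ℕ, inner ℂ x ((S ^ k) x)
      = ∫ t, ((‖X t‖ ^ 2 : ℝ) : ℂ) * fourier (k : ℤ) t ∂AddCircle.haarAddCircle := by
    intro k
    rw [hx, aux_fin_inner S hS0 hS1]
    congr 1
    ext t
    rw [← hXa, mul_comm (conj _), Complex.mul_conj, Complex.normSq_eq_norm_sq]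
  have hfp : ∀ (k : ℕ) (t : AddCircle (1 : ℝ)), fourier (k : ℤ) t = (fourier 1 t) ^ k := by
    intro k t
    induction k with
    | zero => simp
    | succ k ih => rw [Nat.cast_succ, fourier_add, ih, pow_succ]
  have hn1 : ∀ (k : ℤ) (t : AddCircle (1 : ℝ)), ‖fourier k t‖ = 1 := by
    intro k t
    rw [fourier_apply]; exact Circle.norm_coe _
  have hsum1 := aux_hasSum S hS0 hS1 b hb x x
  simp_rw [hk, ← integral_const_mul] at hsum1
  have hcont : ∀ k, Continuous fun t : AddCircle (1 : ℝ) =>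
      b k * (((‖X t‖ ^ 2 : ℝ) : ℂ) * fourier (k : ℤ) t) := fun k => by fun_prop
  have hsum2 := hasSum_integral_of_summable_integral_norm (μ := AddCircle.haarAddCircle)
    (F := fun (k : ℕ) (t : AddCircle (1 : ℝ)) => b k * (((‖X t‖ ^ 2 : ℝ) : ℂ) * fourier (k : ℤ) t))
    (fun k => aux_integrable _ (hcont k)) (by
      simp only [norm_mul, hn1, mul_one, integral_const_mul]
      exact hb.mul_right _)
  rw [hsum1.unique hsum2]
  have hnorm : ‖x‖ ^ 2 = ∫ t, ‖X t‖ ^ 2 ∂AddCircle.haarAddCircle := by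
    have := hk 0
    simp only [pow_zero, one_apply_eq_self, Nat.cast_zero, fourier_zero, mul_one] at this
    rw [integral_complex_ofReal] at this
    have h2 : inner ℂ x x = ((‖x‖ ^ 2 : ℝ) : ℂ) := by
      rw [inner_self_eq_norm_sq_to_K]; norm_cast
    rw [h2] at this
    exact Complex.ofReal_injective this
  have hg : ∀ t : AddCircle (1 : ℝ), ∑' k : ℕ, b k * (((‖X t‖ ^ 2 : ℝ) : ℂ) * fourier (k : ℤ) t)
      = ((‖X t‖ ^ 2 : ℝ) : ℂ) * ∑' k : ℕ, b k * (fourier 1 t) ^ k := by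
    intro t
    rw [← tsum_mul_left]
    congr 1; ext k
    rw [hfp]; ring
  have hci : Continuous fun t : AddCircle (1 : ℝ) =>
      ∑' k : ℕ, b k * (((‖X t‖ ^ 2 : ℝ) : ℂ) * fourier (k : ℤ) t) := by
    simp_rw [hg]
    refine Continuous.mul (by fun_prop) ?_
    refine continuous_tsum (u := fun k => ‖b k‖) (fun k => by fun_prop) hb ?_
    intro k t
    rw [norm_mul, norm_pow, hn1, one_pow, mul_one]
  have hI := aux_integrable _ hci
  rw [hnorm, ← RCLike.re_to_complex, ← integral_re hI]
  refine integral_mono hI.re ?_ fun t => ?_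
  · exact Continuous.integrable_of_hasCompactSupport (by fun_prop)
      (HasCompactSupport.of_compactSpace _)
  · simp only []
    rw [hg, RCLike.re_to_complex, Complex.re_ofReal_mul]
    have := h (fourier 1 t) (hn1 1 t).le
    nlinarith [sq_nonneg ‖X t‖]

lemma aux_main (S : l2N →L[ℂ] l2N) (hS0 : ∀ x : l2N, (S x) 0 = 0)
    (hS1 : ∀ (x : l2N) (k : ℕ), (S x) (k + 1) = x k)
    (b : ℕ → ℂ) (hb : Summable fun k => ‖b k‖) :
    (∀ z : ℂ, ‖z‖ < 1 → (∑' k, b k * z ^ k).re ≤ 1) ↔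
    (2 : ℂ)⁻¹ • ((∑' k : ℕ, b k • S ^ k) +
          ContinuousLinearMap.adjoint (∑' k : ℕ, b k • S ^ k)) ≤ 1 := by
  rw [aux_order]
  refine ⟨fun h x => ?_, fun h z hz => aux_easy S hS0 hS1 b hb h z hz⟩
  have hx : HasSum (fun i => (lp.single 2 i (x i) : l2N)) x := lp.hasSum_single (by norm_num) x
  unfold HasSum at hx
  set T := ∑' k, b k • S ^ k
  have hc : Continuous fun y : l2N => ‖y‖ ^ 2 - (inner ℂ y (T y)).re :=
    (continuous_norm.pow 2).sub
      (Complex.continuous_re.comp (continuous_id.inner T.continuous))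
  have := ge_of_tendsto ((hc.tendsto x).comp hx) (b := 0) (by
    refine (Eventually.of_forall fun s => ?_)
    have := aux_fin S hS0 hS1 b hb (aux_boundary b hb h) s (fun i => x i) _ rfl
    simp only [Function.comp_apply]
    linarith)
  linarith

end shift

lemma aux_dichotomy (a : ℕ → ℂ)
    (hlim : Filter.limsup (fun k : ℕ => ‖a k‖ ^ (1 / (k : ℝ))) Filter.atTop ≤ 1) :
    (∀ r : ℝ, 0 ≤ r → r < 1 → Summable fun k => r ^ k * ‖a k‖) ∨
    (∀ r : ℝ, 0 < r → ¬ Tendsto (fun k => r ^ k * ‖a k‖) atTop (𝓝 0)) := by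
  by_cases hbd : IsBoundedUnder (· ≤ ·) atTop (fun k : ℕ => ‖a k‖ ^ (1 / (k : ℝ)))
  · left
    intro r hr0 hr1
    obtain ⟨d, hd1, hd2⟩ := exists_between hr1
    have hd0 : 0 < d := hr0.trans_lt hd1
    have hlt : limsup (fun k : ℕ => ‖a k‖ ^ (1 / (k : ℝ))) atTop < d⁻¹ :=
      hlim.trans_lt ((one_lt_inv₀ hd0).2 hd2)
    have hev := eventually_lt_of_limsup_lt hlt hbd
    have hg : Summable fun k : ℕ => (r / d) ^ k :=
      summable_geometric_of_lt_one (by positivity) ((div_lt_one hd0).2 hd1)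
    refine hg.of_norm_bounded_eventually_nat ?_
    filter_upwards [hev, eventually_gt_atTop 0] with k hk hk0
    have hak : ‖a k‖ ≤ d⁻¹ ^ k := by
      have : ‖a k‖ = (‖a k‖ ^ (1 / (k : ℝ))) ^ k := by
        rw [one_div, Real.rpow_inv_natCast_pow (norm_nonneg _) hk0.ne']
      rw [this]
      gcongr
    rw [Real.norm_of_nonneg (by positivity), div_eq_mul_inv, mul_pow]
    gcongr
  · right
    intro r hr ht
    apply hbd
    refine ⟨r⁻¹, ?_⟩
    rw [eventually_map]
    filter_upwards [ht.eventually (gt_mem_nhds one_pos), eventually_gt_atTop 0] with k hk hk0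
    have hak : ‖a k‖ ≤ r⁻¹ ^ k := by
      rw [inv_pow, ← one_div, le_div_iff₀ (by positivity)]
      linarith
    calc ‖a k‖ ^ (1 / (k : ℝ)) ≤ (r⁻¹ ^ k) ^ (1 / (k : ℝ)) := by gcongr
      _ = r⁻¹ := by
        rw [one_div, Real.pow_rpow_inv_natCast (by positivity) hk0.ne']

theorem stmt_6 (a : ℕ → ℂ)
    (hlim : Filter.limsup (fun k : ℕ => ‖a k‖ ^ (1 / (k : ℝ))) Filter.atTop ≤ 1)
    (S : l2N →L[ℂ] l2N)
    (hS0 : ∀ x : l2N, (S x) 0 = 0)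
    (hS1 : ∀ (x : l2N) (k : ℕ), (S x) (k + 1) = x k) :
    ((∀ z ∈ Metric.ball (0 : ℂ) 1, (∑' k : ℕ, a k * z ^ k).re ≤ 1) ↔
      (∀ r : ℝ, 0 ≤ r → r < 1 →
        (2 : ℂ)⁻¹ • ((∑' k : ℕ, ((r : ℂ) ^ k * a k) • S ^ k) +
          ContinuousLinearMap.adjoint (∑' k : ℕ, ((r : ℂ) ^ k * a k) • S ^ k)) ≤ 1)) ∧
    ((∃ N : ℕ, ∀ k : ℕ, N ≤ k → a k = 0) →
      ((∀ z ∈ Metric.ball (0 : ℂ) 1, (∑' k : ℕ, a k * z ^ k).re ≤ 1) ↔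
        (2 : ℂ)⁻¹ • ((∑' k : ℕ, a k • S ^ k) +
          ContinuousLinearMap.adjoint (∑' k : ℕ, a k • S ^ k)) ≤ 1)) := by
  refine ⟨?_, ?_⟩
  · rcases aux_dichotomy a hlim with hd | hd
    · have hsum : ∀ r : ℝ, 0 ≤ r → r < 1 → Summable fun k => ‖(r : ℂ) ^ k * a k‖ := by
        intro r h0 h1
        simpa [abs_of_nonneg h0] using hd r h0 h1
      constructor
      · intro h r h0 h1
        refine (aux_main S hS0 hS1 _ (hsum r h0 h1)).1 fun z hz => ?_
        have := h ((r : ℂ) * z) (by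
          rw [mem_ball_zero_iff, norm_mul, Complex.norm_real, Real.norm_of_nonneg h0]
          nlinarith [norm_nonneg z])
        convert this using 4 with k
        rw [mul_pow]; ring
      · intro h z hz
        rw [mem_ball_zero_iff] at hz
        obtain ⟨r, hr1, hr2⟩ := exists_between hz
        have hr0 : 0 < r := (norm_nonneg z).trans_lt hr1
        have hrc : (r : ℂ) ≠ 0 := by exact_mod_cast hr0.ne'
        have := (aux_main S hS0 hS1 _ (hsum r hr0.le hr2)).2 (h r hr0.le hr2) (z / r) (by
          rw [norm_div, Complex.norm_real, Real.norm_of_nonneg hr0.le]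
          exact (div_lt_one hr0).2 hr1)
        convert this using 4 with k
        rw [div_pow]
        field_simp
    · -- degenerate case: radius of convergence zero
      have hL : ∀ z : ℂ, z ≠ 0 → ∑' k, a k * z ^ k = 0 := by
        intro z hz
        refine tsum_eq_zero_of_not_summable fun hs => hd ‖z‖ (norm_pos_iff.2 hz) ?_
        simpa [mul_comm] using hs.tendsto_atTop_zero.norm
      have hR : ∀ r : ℝ, 0 < r → ∑' k, ((r : ℂ) ^ k * a k) • S ^ k = 0 := by
        intro r hr
        refine tsum_eq_zero_of_not_summable fun hs => hd r hr ?_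
        simpa [norm_smul, aux_opnorm S hS0 hS1, abs_of_pos hr] using
          hs.tendsto_atTop_zero.norm
      -- compare at the origin with the constant coefficient
      have hb : Summable fun k => ‖((0 : ℝ) : ℂ) ^ k * a k‖ := by
        refine summable_of_ne_finset_zero (s := {0}) fun k hk => ?_
        have : k ≠ 0 := by simpa using hk
        simp [this]
      have h0 := aux_main S hS0 hS1 _ hb
      have e : ∀ z : ℂ, ∑' k, ((0 : ℝ) : ℂ) ^ k * a k * z ^ k = a 0 := by
        intro z
        rw [tsum_eq_single 0]
        · simp
        · intro k hk; simp [hk]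
      have e0 : ∑' k, a k * (0 : ℂ) ^ k = a 0 := by
        rw [tsum_eq_single 0]
        · simp
        · intro k hk; simp [hk]
      constructor
      · intro h r hr0 hr1
        rcases hr0.eq_or_lt with rfl | hr
        · refine h0.1 fun z _ => ?_
          rw [e, ← e0]
          exact h 0 (by simp)
        · rw [hR r hr, aux_order]
          intro x
          simp
      · intro h z hz
        by_cases hz0 : z = 0
        · have := h0.2 (h 0 le_rfl one_pos) 0 (by simp)
          rw [e] at this
          rw [hz0, e0]; exact this
        · rw [hL z hz0]; simp
  · rintro ⟨N, hN⟩
    have hb : Summable fun k => ‖a k‖ := by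
      refine summable_of_ne_finset_zero (s := Finset.range N) fun k hk => ?_
      rw [hN k (by simpa using hk), norm_zero]
    rw [← aux_main S hS0 hS1 a hb]
    simp only [mem_ball_zero_iff]
end

section
/- Let m ≥ 2 be an integer and let p(z) = ∑_{k=0}^{m−1} a_k z^k be a polynomial with complex coefficients such that a₀ is real, a₀ ≥ 0, and Re p(z) ≤ 1 for all z ∈ 𝔻. Then |a_k| ≤ 2(1 − a₀) · cos(π/(⌊(m−1)/k⌋ + 2)) for every 1 ≤ k ≤ m−1. -/
open scoped BigOperators

lemma aux_cos (L : ℕ) (hL : 2 ≤ L) (j : ℕ) :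
    Real.cos ((2 * j + 1) * Real.pi / L) ≤ Real.cos (Real.pi / L) := by
  have hL0 : (0 : ℝ) < L := by positivity
  have hmod : j % L < L := Nat.mod_lt _ (by omega)
  have hj : (j : ℝ) = (j % L : ℕ) + L * (j / L : ℕ) := by
    exact_mod_cast (Nat.mod_add_div j L).symm
  set r := j % L
  set s := j / L
  have h1 : (2 * (j : ℝ) + 1) * Real.pi / L
      = (2 * r + 1) * Real.pi / L + (s : ℕ) * (2 * Real.pi) := by
    rw [hj]; field_simp; ring
  rw [h1, Real.cos_add_nat_mul_two_pi]
  have h2 := Real.cos_sub_cos ((2 * r + 1) * Real.pi / L) (Real.pi / L)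
  have e1 : ((2 * r + 1) * Real.pi / L + Real.pi / L) / 2 = ((r : ℝ) + 1) / L * Real.pi := by
    field_simp; ring
  have e2 : ((2 * r + 1) * Real.pi / L - Real.pi / L) / 2 = (r : ℝ) / L * Real.pi := by
    field_simp; ring
  rw [e1, e2] at h2
  have hr : (r : ℝ) + 1 ≤ L := by exact_mod_cast hmod
  have key : ∀ t : ℝ, 0 ≤ t → t ≤ L → 0 ≤ Real.sin (t / L * Real.pi) := by
    intro t h0 h1
    apply Real.sin_nonneg_of_nonneg_of_le_pi
    · positivity
    · have : t / L ≤ 1 := by rw [div_le_one hL0]; exact h1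
      nlinarith [Real.pi_pos]
  have s1 := key (r + 1) (by positivity) hr
  have s2 := key r (by positivity) (by linarith)
  nlinarith [mul_nonneg s1 s2]

lemma aux_sum (M : ℕ) (hM : 0 < M) (ω η : ℂ) (hω : IsPrimitiveRoot ω M) (e : ℤ)
    (he : |e| < M) :
    ∑ j ∈ Finset.range M, (η * ω ^ j) ^ e = if e = 0 then (M : ℂ) else 0 := by
  split_ifs with h
  · simp [h]
  · have h1 : ∀ j ∈ Finset.range M, (η * ω ^ j) ^ e = η ^ e * (ω ^ e) ^ j := by
      intro j _
      rw [mul_zpow, ← zpow_natCast, ← zpow_mul, ← zpow_natCast, ← zpow_mul, mul_comm e]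
    rw [Finset.sum_congr rfl h1, ← Finset.mul_sum]
    have hne : ω ^ e ≠ 1 := by
      intro h2
      rw [hω.zpow_eq_one_iff_dvd] at h2
      exact h (Int.eq_zero_of_abs_lt_dvd h2 he)
    rw [geom_sum_eq hne]
    have : (ω ^ e) ^ M = 1 := by
      rw [← zpow_natCast, ← zpow_mul, mul_comm, zpow_mul, zpow_natCast, hω.pow_eq_one, one_zpow]
    simp [this]

theorem stmt_7 (m : ℕ) (hm : 2 ≤ m) (a : ℕ → ℂ)
    (ha_im : (a 0).im = 0) (ha_nonneg : 0 ≤ (a 0).re)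
    (hre : ∀ z ∈ Metric.ball (0 : ℂ) 1, (∑ k ∈ Finset.range m, a k * z ^ k).re ≤ 1) :
    ∀ k : ℕ, 1 ≤ k → k ≤ m - 1 →
      ‖a k‖ ≤
        2 * (1 - (a 0).re) * Real.cos (Real.pi / (((m - 1) / k + 2 : ℕ) : ℝ)) := by
  intro k hk hkm
  have hcl : ∀ z : ℂ, ‖z‖ = 1 → (∑ k ∈ Finset.range m, a k * z ^ k).re ≤ 1 := by
    intro z hz
    have hz' : z ∈ closure (Metric.ball (0 : ℂ) 1) := by
      rw [closure_ball _ one_ne_zero]; simp [hz]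
    exact le_on_closure (f := fun z : ℂ => (∑ k ∈ Finset.range m, a k * z ^ k).re)
      (g := fun _ => 1) hre (by fun_prop) (by fun_prop) hz'
  obtain ⟨L, hLdef⟩ : ∃ L, L = (m - 1) / k + 2 := ⟨_, rfl⟩
  rw [← hLdef]
  have hL : 2 ≤ L := by rw [hLdef]; exact Nat.le_add_left _ _
  have hmL : m - 1 + k < k * L := by
    have := Nat.lt_mul_div_succ (m - 1) (show 0 < k by omega)
    rw [hLdef]; nlinarith
  set lam := Real.cos (Real.pi / (L : ℝ)) with hlam
  obtain ⟨M, hMdef⟩ : ∃ M, M = k * L := ⟨_, rfl⟩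
  rw [← hMdef] at hmL
  have hM : 0 < M := by omega
  have hMc : (M : ℂ) ≠ 0 := by exact_mod_cast hM.ne'
  have hkc : (k : ℂ) ≠ 0 := by exact_mod_cast (show k ≠ 0 by omega)
  have hLc : (L : ℂ) ≠ 0 := by exact_mod_cast (show L ≠ 0 by omega)
  -- rotation
  obtain ⟨v, hv, hvk⟩ : ∃ v : ℂ, ‖v‖ = 1 ∧ a k * v ^ k = -(‖a k‖ : ℂ) := by
    refine ⟨Complex.exp (((Real.pi - (a k).arg) / k : ℝ) * Complex.I),
      Complex.norm_exp_ofReal_mul_I _, ?_⟩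
    rw [← Complex.exp_nat_mul]
    nth_rewrite 1 [← Complex.norm_mul_exp_arg_mul_I (a k)]
    rw [mul_assoc, ← Complex.exp_add]
    have : (a k).arg * Complex.I + k * ((((Real.pi - (a k).arg) / k : ℝ) : ℂ) * Complex.I)
        = Real.pi * Complex.I := by
      push_cast; field_simp; ring
    rw [this, Complex.exp_pi_mul_I]; ring
  set ω := Complex.exp (2 * Real.pi * Complex.I / M) with hωdef
  have hω : IsPrimitiveRoot ω M := Complex.isPrimitiveRoot_exp M hM.ne'
  set η := Complex.exp (Real.pi * Complex.I / M) with hηdef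
  have hx : ∀ j : ℕ, η * ω ^ j = Complex.exp (((2 * j + 1) * Real.pi / M : ℝ) * Complex.I) := by
    intro j
    rw [hηdef, hωdef, ← Complex.exp_nat_mul, ← Complex.exp_add]
    congr 1; push_cast; field_simp; ring
  set w : ℕ → ℝ := fun j => lam - Real.cos ((2 * j + 1) * Real.pi / L) with hw
  have hw0 : ∀ j, 0 ≤ w j := fun j => sub_nonneg.2 (aux_cos L hL j)
  have hwx : ∀ j : ℕ, (w j : ℂ) =
      lam - ((η * ω ^ j) ^ (k : ℤ) + (η * ω ^ j) ^ (-(k : ℤ))) / 2 := by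
    intro j
    rw [zpow_neg, zpow_natCast, hx, ← Complex.exp_nat_mul, ← Complex.exp_neg]
    simp only [hw]
    push_cast
    rw [Complex.cos, hMdef]
    have : (k : ℂ) * ((2 * j + 1) * Real.pi / (k * L : ℕ) * Complex.I)
        = (2 * j + 1) * Real.pi / L * Complex.I := by
      push_cast; field_simp
    rw [this, neg_mul]
  have hF : ∀ l ∈ Finset.range m, ∑ j ∈ Finset.range M, (w j : ℂ) * (η * ω ^ j) ^ l
      = M * ((if l = 0 then (lam : ℂ) else 0) - (if l = k then 1 / 2 else 0)) := by
    intro l hl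
    rw [Finset.mem_range] at hl
    have hne : ∀ j, η * ω ^ j ≠ 0 := fun j => by rw [hx]; exact Complex.exp_ne_zero _
    have e1 : ∀ j ∈ Finset.range M, (w j : ℂ) * (η * ω ^ j) ^ l =
        lam * (η * ω ^ j) ^ (l : ℤ) - (1 / 2) * (η * ω ^ j) ^ ((l : ℤ) + k)
          - (1 / 2) * (η * ω ^ j) ^ ((l : ℤ) - k) := by
      intro j _
      rw [hwx, zpow_add₀ (hne j), sub_eq_add_neg (l : ℤ), zpow_add₀ (hne j), zpow_natCast _ l]
      ring
    rw [Finset.sum_congr rfl e1, Finset.sum_sub_distrib, Finset.sum_sub_distrib,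
      ← Finset.mul_sum, ← Finset.mul_sum, ← Finset.mul_sum,
      aux_sum M hM ω η hω (l : ℤ) (by rw [abs_lt]; omega),
      aux_sum M hM ω η hω ((l : ℤ) + k) (by rw [abs_lt]; omega),
      aux_sum M hM ω η hω ((l : ℤ) - k) (by rw [abs_lt]; omega)]
    have c1 : ((l : ℤ) + k = 0) ↔ False := iff_false_intro (by omega)
    have c2 : ((l : ℤ) - k = 0) ↔ l = k := by omega
    have c3 : ((l : ℤ) = 0) ↔ l = 0 := by omega
    simp only [c1, c2, c3, if_false]
    split_ifs <;> ring
  have hmain : ∑ j ∈ Finset.range M, (w j : ℂ) *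
      (1 - ∑ l ∈ Finset.range m, a l * (v * (η * ω ^ j)) ^ l)
      = M * (lam * (1 - a 0) - ‖a k‖ / 2) := by
    have e0 := hF 0 (by simp; omega)
    simp only [pow_zero, mul_one] at e0
    have e2 : ∑ j ∈ Finset.range M, (w j : ℂ) *
        ∑ l ∈ Finset.range m, a l * (v * (η * ω ^ j)) ^ l
        = ∑ l ∈ Finset.range m, (a l * v ^ l) *
          (M * ((if l = 0 then (lam : ℂ) else 0) - (if l = k then 1 / 2 else 0))) := by
      simp only [Finset.mul_sum]
      rw [Finset.sum_comm]
      refine Finset.sum_congr rfl fun l hl => ?_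
      rw [← hF l hl, Finset.mul_sum]
      refine Finset.sum_congr rfl fun j _ => ?_
      rw [mul_pow]; ring
    simp only [mul_sub (_ : ℂ) 1, mul_one, Finset.sum_sub_distrib]
    rw [e0, e2]
    have h0k : ¬ (0 = k) := by omega
    have i0 : 0 < m := by omega
    have ik : k < m := by omega
    simp only [mul_sub, Finset.sum_sub_distrib, mul_ite, mul_zero, Finset.sum_ite_eq',
      Finset.mem_range, i0, ik, if_true, h0k, if_false]
    linear_combination (M : ℂ) / 2 * hvk
  have hnn : 0 ≤ (∑ j ∈ Finset.range M, (w j : ℂ) *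
      (1 - ∑ l ∈ Finset.range m, a l * (v * (η * ω ^ j)) ^ l)).re := by
    rw [Complex.re_sum]
    refine Finset.sum_nonneg fun j _ => ?_
    rw [Complex.re_ofReal_mul]
    refine mul_nonneg (hw0 j) ?_
    have := hcl (v * (η * ω ^ j)) (by rw [norm_mul, hv, hx, Complex.norm_exp_ofReal_mul_I, one_mul])
    rw [Complex.sub_re, Complex.one_re]
    linarith
  rw [hmain] at hnn
  have hr : ((M : ℂ) * (lam * (1 - a 0) - ‖a k‖ / 2)).re
      = M * (lam * (1 - (a 0).re) - ‖a k‖ / 2) := by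
    have ha : a 0 = ((a 0).re : ℂ) := by
      apply Complex.ext <;> simp [ha_im]
    rw [ha]
    simp only [Complex.ofReal_re]
    exact_mod_cast Complex.ofReal_re _
  rw [hr] at hnn
  have hMr : (0 : ℝ) < M := by exact_mod_cast hM
  have := nonneg_of_mul_nonneg_right hnn hMr
  linarith
end

section
/- Let m ≥ 2 be an integer and let p(z) = ∑_{k=0}^{m−1} a_k z^k be a polynomial with complex coefficients such that a₀ is real, a₀ ≥ 0, and Re p(z) ≤ 1 for all z ∈ 𝔻. Then ∑_{k=0}^{m−1} |a_k| r^k ≤ 1 for every r with 0 ≤ r ≤ t_m. -/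
open scoped BigOperators

lemma aux_weight (M : ℕ) (hM : 2 ≤ M) (j : ℕ) :
    Real.cos ((2 * (j : ℝ) + 1) * (Real.pi / M)) ≤ Real.cos (Real.pi / M) := by
  have hM0 : (0 : ℝ) < M := by positivity
  have hper : Real.cos ((2 * (j : ℝ) + 1) * (Real.pi / M))
      = Real.cos ((2 * ((j % M : ℕ) : ℝ) + 1) * (Real.pi / M)) := by
    have h : (j : ℝ) = ((j % M : ℕ) : ℝ) + M * ((j / M : ℕ) : ℝ) := by
      exact_mod_cast (Nat.mod_add_div j M).symm
    rw [← Real.cos_add_nat_mul_two_pi ((2 * ((j % M : ℕ) : ℝ) + 1) * (Real.pi / M)) (j / M)]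
    congr 1
    rw [h]
    push_cast
    field_simp
    ring
  rw [hper]
  have hlt : j % M < M := Nat.mod_lt _ (by omega)
  generalize j % M = i at hlt
  have hi : ((i : ℝ) + 1) ≤ M := by exact_mod_cast hlt
  have h1 : 0 ≤ Real.sin (((i : ℝ) + 1) * (Real.pi / M)) := by
    apply Real.sin_nonneg_of_nonneg_of_le_pi (by positivity)
    calc ((i : ℝ) + 1) * (Real.pi / M) ≤ M * (Real.pi / M) := by gcongr
      _ = Real.pi := by field_simp
  have h2 : 0 ≤ Real.sin ((i : ℝ) * (Real.pi / M)) := by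
    apply Real.sin_nonneg_of_nonneg_of_le_pi (by positivity)
    calc (i : ℝ) * (Real.pi / M) ≤ M * (Real.pi / M) := by gcongr
      _ = Real.pi := by field_simp
  have h3 : Real.cos ((2 * (i : ℝ) + 1) * (Real.pi / M)) - Real.cos (Real.pi / M)
      = -2 * Real.sin (((i : ℝ) + 1) * (Real.pi / M)) * Real.sin ((i : ℝ) * (Real.pi / M)) := by
    rw [Real.cos_sub_cos]
    ring_nf
  nlinarith [mul_nonneg h1 h2]

lemma aux_root (a : ℂ) (k : ℕ) (hk : 1 ≤ k) :
    ∃ u : ℂ, ‖u‖ = 1 ∧ a * u ^ k = -(‖a‖ : ℂ) := by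
  refine ⟨Complex.exp ((((Real.pi - a.arg) / k : ℝ) : ℂ) * Complex.I),
    Complex.norm_exp_ofReal_mul_I _, ?_⟩
  have hk0 : (k : ℂ) ≠ 0 := by exact_mod_cast (by omega : k ≠ 0)
  rw [← Complex.exp_nat_mul]
  generalize hv : (((Real.pi - a.arg) / k : ℝ) : ℂ) = v
  conv_lhs => rw [← Complex.norm_mul_exp_arg_mul_I a]
  subst hv
  rw [mul_assoc, ← Complex.exp_add]
  have : (a.arg : ℂ) * Complex.I + k * ((((Real.pi - a.arg) / k : ℝ) : ℂ) * Complex.I)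
      = Real.pi * Complex.I := by
    push_cast
    field_simp
    ring
  rw [this, Complex.exp_pi_mul_I]
  ring

lemma aux_S (K : ℕ) (hK : 0 < K) (ω ζ : ℂ) (hζ : IsPrimitiveRoot ζ K) (e : ℤ)
    (he : |e| < K) :
    ∑ j ∈ Finset.range K, (ω * ζ ^ j) ^ e = if e = 0 then (K : ℂ) else 0 := by
  split_ifs with h
  · simp [h]
  · have hne : ζ ^ e ≠ 1 := by
      rw [Ne, hζ.zpow_eq_one_iff_dvd]
      intro hd
      exact h (Int.eq_zero_of_abs_lt_dvd hd he)
    have h1 : ∀ j : ℕ, (ω * ζ ^ j) ^ e = ω ^ e * (ζ ^ e) ^ j := by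
      intro j
      rw [mul_zpow, ← zpow_natCast, ← zpow_natCast, ← zpow_mul, ← zpow_mul, mul_comm e]
    simp_rw [h1]
    rw [← Finset.mul_sum, geom_sum_eq hne]
    have : (ζ ^ e) ^ K = 1 := by
      rw [← zpow_natCast, ← zpow_mul, mul_comm, zpow_mul, zpow_natCast, hζ.pow_eq_one, one_zpow]
    rw [this]; simp

lemma aux_coeff (m : ℕ) (a : ℕ → ℂ)
    (H : ∀ z : ℂ, ‖z‖ = 1 → (∑ k ∈ Finset.range m, a k * z ^ k).re ≤ 1)
    (k : ℕ) (hk : 1 ≤ k) (hkm : k < m) :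
    ‖a k‖ ≤ 2 * (1 - (a 0).re) * Real.cos (Real.pi / (((m - 1) / k + 2 : ℕ) : ℝ)) := by
  obtain ⟨u, hu, huk⟩ := aux_root (a k) k hk
  set M : ℕ := (m - 1) / k + 2 with hMdef
  have hM : 2 ≤ M := Nat.le_add_left 2 _
  have hMK : m - 1 + k < k * M := by
    have := Nat.lt_mul_div_succ (m - 1) (show 0 < k by omega)
    rw [hMdef]; nlinarith
  set K : ℕ := k * M with hKdef
  have hK : 0 < K := by omega
  have hKC : (K : ℂ) ≠ 0 := by exact_mod_cast hK.ne'
  set c : ℝ := Real.cos (Real.pi / (M : ℝ)) with hc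
  set ζ : ℂ := Complex.exp (2 * Real.pi * Complex.I / K) with hζd
  have hζ : IsPrimitiveRoot ζ K := Complex.isPrimitiveRoot_exp K hK.ne'
  set ω : ℂ := Complex.exp (Real.pi * Complex.I / K) with hωd
  set x : ℕ → ℂ := fun j => ω * ζ ^ j with hx
  have hxexp : ∀ j, x j = Complex.exp ((((2 * (j : ℝ) + 1) * (Real.pi / K) : ℝ) : ℂ) * Complex.I) := by
    intro j
    simp only [hx, hωd, hζd]
    rw [← Complex.exp_nat_mul, ← Complex.exp_add]
    congr 1
    push_cast
    ring
  have hx1 : ∀ j, ‖x j‖ = 1 := by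
    intro j; rw [hxexp]; exact Complex.norm_exp_ofReal_mul_I _
  have hx0 : ∀ j, x j ≠ 0 := by
    intro j h; have := hx1 j; rw [h] at this; simp at this
  set w : ℕ → ℝ := fun j => c - Real.cos ((2 * (j : ℝ) + 1) * (Real.pi / M)) with hw
  have hw0 : ∀ j, 0 ≤ w j := fun j => sub_nonneg.2 (aux_weight M hM j)
  have hwx : ∀ j, ((w j : ℝ) : ℂ) = c - (x j ^ (k : ℤ) + x j ^ (-(k : ℤ))) / 2 := by
    intro j
    have hkC : (k : ℂ) ≠ 0 := by exact_mod_cast (by omega : k ≠ 0)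
    have hMC : (M : ℂ) ≠ 0 := by exact_mod_cast (by omega : M ≠ 0)
    simp only [hw]
    push_cast
    rw [Complex.cos, hxexp, ← Complex.exp_int_mul, ← Complex.exp_int_mul, hKdef]
    congr 4
    · push_cast; field_simp
    · push_cast; field_simp
  have hsum : ∀ l : ℕ, l < m → ∑ j ∈ Finset.range K, ((w j : ℝ) : ℂ) * x j ^ l
      = (K : ℂ) * ((if l = 0 then (c : ℂ) else 0) - (if l = k then 1 / 2 else 0)) := by
    intro l hl
    have h1 : ∀ j, ((w j : ℝ) : ℂ) * x j ^ l
        = c * x j ^ (l : ℤ) - (1 / 2) * x j ^ ((l : ℤ) + k) - (1 / 2) * x j ^ ((l : ℤ) - k) := by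
      intro j
      rw [hwx, zpow_add₀ (hx0 j), sub_eq_add_neg (l : ℤ), zpow_add₀ (hx0 j), zpow_natCast (x j) l]
      ring
    simp_rw [h1]
    rw [Finset.sum_sub_distrib, Finset.sum_sub_distrib, ← Finset.mul_sum, ← Finset.mul_sum,
      ← Finset.mul_sum]
    simp only [hx]
    rw [aux_S K hK ω ζ hζ _ (by rw [abs_lt]; omega), aux_S K hK ω ζ hζ _ (by rw [abs_lt]; omega),
      aux_S K hK ω ζ hζ _ (by rw [abs_lt]; omega)]
    have e1 : ((l : ℤ) = 0) ↔ l = 0 := by omega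
    have e2 : ((l : ℤ) + k = 0) ↔ False := by simp only [iff_false]; omega
    have e3 : ((l : ℤ) - k = 0) ↔ l = k := by omega
    simp only [e1, e2, e3, if_false]
    split_ifs <;> ring
  have hpos : 0 ≤ ∑ j ∈ Finset.range K,
      w j * (1 - (∑ l ∈ Finset.range m, a l * (u * x j) ^ l).re) := by
    apply Finset.sum_nonneg
    intro j _
    apply mul_nonneg (hw0 j)
    have := H (u * x j) (by rw [norm_mul, hu, hx1, one_mul])
    linarith
  have hcomp : ∑ j ∈ Finset.range K,
      ((w j : ℝ) : ℂ) * (1 - (∑ l ∈ Finset.range m, a l * (u * x j) ^ l))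
      = (K : ℂ) * (c - (a 0 * c - a k * u ^ k / 2)) := by
    have h0 := hsum 0 (by omega)
    simp only [pow_zero, mul_one, if_true] at h0
    rw [if_neg (by omega)] at h0
    simp_rw [mul_sub, mul_one, Finset.sum_sub_distrib, h0, Finset.mul_sum]
    rw [Finset.sum_comm]
    have h2 : ∀ l ∈ Finset.range m, ∑ j ∈ Finset.range K, ((w j : ℝ) : ℂ) * (a l * (u * x j) ^ l)
        = (if l = 0 then K * (a 0 * c) else 0) - (if l = k then K * (a k * u ^ k / 2) else 0) := by
      intro l hl
      have h3 : ∀ j, ((w j : ℝ) : ℂ) * (a l * (u * x j) ^ l)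
          = a l * u ^ l * (((w j : ℝ) : ℂ) * x j ^ l) := by
        intro j; rw [mul_pow]; ring
      simp_rw [h3]
      rw [← Finset.mul_sum, hsum l (Finset.mem_range.1 hl)]
      by_cases hl0 : l = 0
      · subst hl0
        rw [if_pos rfl, if_neg (by omega), if_pos rfl, if_neg (by omega)]
        simp; ring
      · by_cases hlk : l = k
        · subst hlk
          simp [hl0]; ring
        · simp [hl0, hlk]
    rw [Finset.sum_congr rfl h2, Finset.sum_sub_distrib, Finset.sum_ite_eq', Finset.sum_ite_eq',
      if_pos (Finset.mem_range.2 (by omega)), if_pos (Finset.mem_range.2 hkm)]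
    ring
  have hre := congrArg Complex.re hcomp
  rw [Complex.re_sum] at hre
  simp only [Complex.re_ofReal_mul, Complex.sub_re, Complex.one_re] at hre
  rw [hre, huk] at hpos
  have hval : ((K : ℂ) * (c - (a 0 * c - -(‖a k‖ : ℂ) / 2))).re
      = K * (c - ((a 0).re * c + ‖a k‖ / 2)) := by
    have : (K : ℂ) = ((K : ℝ) : ℂ) := by simp
    rw [this, Complex.re_ofReal_mul, Complex.sub_re, Complex.sub_re, Complex.re_mul_ofReal]
    have : (-(‖a k‖ : ℂ) / 2) = ((-(‖a k‖) / 2 : ℝ) : ℂ) := by push_cast; ring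
    rw [this, Complex.ofReal_re, Complex.ofReal_re]
    ring
  rw [hval] at hpos
  have hKR : (0 : ℝ) < K := by exact_mod_cast hK
  have := nonneg_of_mul_nonneg_right hpos hKR
  nlinarith

theorem stmt_8 (m : ℕ) (hm : 2 ≤ m) (a : ℕ → ℂ)
    (ha_im : (a 0).im = 0) (ha_nonneg : 0 ≤ (a 0).re)
    (hre : ∀ z ∈ Metric.ball (0 : ℂ) 1, (∑ k ∈ Finset.range m, a k * z ^ k).re ≤ 1)
    (t : ℝ) (htm : t ∈ Set.Ioc (0 : ℝ) 1) (hts : fm m t = 1 / 2) :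
    ∀ r : ℝ, 0 ≤ r → r ≤ t →
      ∑ k ∈ Finset.range m, ‖a k‖ * r ^ k ≤ 1 := by
  intro r hr hrt
  have H : ∀ z : ℂ, ‖z‖ = 1 → (∑ k ∈ Finset.range m, a k * z ^ k).re ≤ 1 := by
    intro z hz
    have hcl : IsClosed {z : ℂ | (∑ k ∈ Finset.range m, a k * z ^ k).re ≤ 1} := by
      apply isClosed_le _ continuous_const
      apply Complex.continuous_re.comp
      fun_prop
    have hsub := closure_minimal (s := Metric.ball (0 : ℂ) 1) hre hcl
    rw [closure_ball _ one_ne_zero] at hsub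
    exact hsub (by simp [hz])
  have ha1 : (a 0).re ≤ 1 := by
    have h := hre 0 (by simp)
    rw [Finset.sum_eq_single 0 (by intro b _ hb; simp [hb]) (by intro h; simp at h; omega)] at h
    simpa using h
  have ha0 : ‖a 0‖ = (a 0).re := by
    have : a 0 = ((a 0).re : ℂ) := Complex.ext rfl (by simpa using ha_im)
    rw [this, Complex.norm_real, Real.norm_of_nonneg ha_nonneg, Complex.ofReal_re]
  have hset : Finset.range m = insert 0 (Finset.Icc 1 (m - 1)) := by
    ext i; simp; omega
  rw [hset, Finset.sum_insert (by simp), ha0, pow_zero, mul_one]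
  have hb : ∑ k ∈ Finset.Icc 1 (m - 1), ‖a k‖ * r ^ k ≤ 2 * (1 - (a 0).re) * fm m t := by
    rw [fm, Finset.mul_sum]
    apply Finset.sum_le_sum
    intro k hk
    rw [Finset.mem_Icc] at hk
    have h1 := aux_coeff m a H k hk.1 (by omega)
    have h2 : r ^ k ≤ t ^ k := pow_le_pow_left₀ hr hrt k
    calc ‖a k‖ * r ^ k ≤ ‖a k‖ * t ^ k := by gcongr
      _ ≤ (2 * (1 - (a 0).re) * Real.cos (Real.pi / (((m - 1) / k + 2 : ℕ) : ℝ))) * t ^ k :=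
          mul_le_mul_of_nonneg_right h1 (pow_nonneg htm.1.le k)
      _ = _ := by ring
  rw [hts] at hb
  linarith
end

section
/- Let (a_α)_{α ∈ 𝔽ₙ⁺} be complex numbers with a_{g₀} real, a_{g₀} ≥ 0, such that for every r ∈ [0,1) the series ∑_{k=0}^∞ r^k (∑_{|α|=k} |a_α|²)^{1/2} converges. Assume that for every r ∈ [0,1) the operator f(rS) := ∑_{k=0}^∞ ∑_{|α|=k} r^k a_α S_α (which converges in operator norm) satisfies Re f(rS) ≤ I. Then: (i) (∑_{|α|=k} |a_α|²)^{1/2} ≤ 2(1 − a_{g₀}) for every k ≥ 1; (ii) for every complex Hilbert space 𝒦 and every (T₁,…,Tₙ) ∈ [B(𝒦)ⁿ]_{1/3}, ∑_{k=0}^∞ ‖∑_{|α|=k} |a_α| T_α‖ ≤ 1; in particular, ∑_{α ∈ 𝔽ₙ⁺} |a_α| r_α ≤ 1 for every tuple r of nonnegative reals with ‖r‖₂ ≤ 1/3. -/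
open scoped BigOperators

theorem sum_ofFn_succ {n k : ℕ} {M : Type*} [AddCommMonoid M] (g : List (Fin n) → M) :
    ∑ w : Fin (k + 1) → Fin n, g (List.ofFn w) =
      ∑ i : Fin n, ∑ w : Fin k → Fin n, g (i :: List.ofFn w) := by
  rw [← (Fin.consEquiv (fun _ : Fin (k + 1) => Fin n)).sum_comp, Fintype.sum_prod_type]
  refine Finset.sum_congr rfl fun i _ => Finset.sum_congr rfl fun w _ => ?_
  simp [Fin.consEquiv, List.ofFn_succ]

theorem series_bound (c : ℝ) (A B : ℕ → ℝ) (hB : ∀ k, 0 ≤ B k)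
    (hA : ∀ k, 1 ≤ k → A k ≤ 2 * (1 - c)) (hBA : ∀ k, B k ≤ A k * (1 / 3) ^ k)
    (hB0 : B 0 ≤ c) : Summable B ∧ ∑' k, B k ≤ 1 := by
  have hle : ∀ k, B (k + 1) ≤ 2 * (1 - c) * (1 / 3) * (1 / 3) ^ k := by
    intro k
    have h1 := hBA (k + 1)
    have h2 := mul_le_mul_of_nonneg_right (hA (k + 1) (by omega))
      (by positivity : (0 : ℝ) ≤ (1 / 3) ^ (k + 1))
    calc B (k + 1) ≤ _ := h1.trans h2
      _ = _ := by rw [pow_succ]; ring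
  have hg : HasSum (fun k : ℕ => 2 * (1 - c) * (1 / 3) * (1 / 3 : ℝ) ^ k) (1 - c) := by
    have := (hasSum_geometric_of_lt_one (r := (1 / 3 : ℝ)) (by norm_num) (by norm_num)).mul_left
      (2 * (1 - c) * (1 / 3))
    have he : 2 * (1 - c) * (1 / 3) * (1 - 1 / 3 : ℝ)⁻¹ = 1 - c := by
      norm_num
      ring
    rwa [he] at this
  have hs1 : Summable (fun k => B (k + 1)) :=
    Summable.of_nonneg_of_le (fun k => hB _) hle hg.summable
  have hs : Summable B := (summable_nat_add_iff 1).1 hs1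
  refine ⟨hs, ?_⟩
  rw [hs.tsum_eq_zero_add]
  have := hs1.tsum_le_tsum hle hg.summable
  rw [hg.tsum_eq] at this
  linarith

theorem sum_adj_sq {n : ℕ} {K : Type*} [NormedAddCommGroup K] [InnerProductSpace ℂ K]
    [CompleteSpace K] (T : Fin n → K →L[ℂ] K) (ρ : ℝ)
    (h1 : ∀ x, ∑ i, ‖ContinuousLinearMap.adjoint (T i) x‖ ^ 2 ≤ ρ ^ 2 * ‖x‖ ^ 2) (k : ℕ) :
    ∀ x, ∑ w : Fin k → Fin n,
      ‖ContinuousLinearMap.adjoint (wordProd T (List.ofFn w)) x‖ ^ 2 ≤ (ρ ^ k) ^ 2 * ‖x‖ ^ 2 := by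
  induction k with
  | zero =>
    intro x
    simp [wordProd, ← ContinuousLinearMap.star_eq_adjoint]
  | succ k ih =>
    intro x
    rw [sum_ofFn_succ (fun l => ‖ContinuousLinearMap.adjoint (wordProd T l) x‖ ^ 2)]
    have : ∀ i, ∑ w : Fin k → Fin n,
        ‖ContinuousLinearMap.adjoint (wordProd T (i :: List.ofFn w)) x‖ ^ 2 ≤
        (ρ ^ k) ^ 2 * ‖ContinuousLinearMap.adjoint (T i) x‖ ^ 2 := by
      intro i
      refine le_trans (le_of_eq ?_) (ih (ContinuousLinearMap.adjoint (T i) x))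
      refine Finset.sum_congr rfl fun w _ => ?_
      simp [wordProd, ← ContinuousLinearMap.star_eq_adjoint]
    refine (Finset.sum_le_sum fun i _ => this i).trans ?_
    rw [← Finset.mul_sum]
    refine (mul_le_mul_of_nonneg_left (h1 x) (by positivity)).trans (le_of_eq ?_)
    ring

theorem adj_base {n : ℕ} {K : Type*} [NormedAddCommGroup K] [InnerProductSpace ℂ K]
    [CompleteSpace K] (T : Fin n → K →L[ℂ] K)
    (hT : Real.sqrt ‖∑ i, T i * ContinuousLinearMap.adjoint (T i)‖ ≤ 1 / 3) (x : K) :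
    ∑ i, ‖ContinuousLinearMap.adjoint (T i) x‖ ^ 2 ≤ (1 / 3 : ℝ) ^ 2 * ‖x‖ ^ 2 := by
  have h0 : ‖∑ i, T i * ContinuousLinearMap.adjoint (T i)‖ ≤ (1 / 3 : ℝ) ^ 2 :=
    (Real.sqrt_le_left (by norm_num)).1 hT
  have h2 : ∑ i, ‖ContinuousLinearMap.adjoint (T i) x‖ ^ 2 =
      RCLike.re (inner ℂ x ((∑ i, T i * ContinuousLinearMap.adjoint (T i)) x)) := by
    rw [ContinuousLinearMap.sum_apply, inner_sum, map_sum]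
    refine Finset.sum_congr rfl fun i _ => ?_
    rw [ContinuousLinearMap.mul_apply, ← ContinuousLinearMap.adjoint_inner_left,
      inner_self_eq_norm_sq]
  rw [h2]
  refine (RCLike.re_le_norm _).trans ((norm_inner_le_norm _ _).trans ?_)
  have h3 := ContinuousLinearMap.le_opNorm (∑ i, T i * ContinuousLinearMap.adjoint (T i)) x
  have h4 := mul_le_mul_of_nonneg_right h0 (norm_nonneg x)
  have h5 := mul_le_mul_of_nonneg_left (h3.trans h4) (norm_nonneg x)
  refine h5.trans (le_of_eq ?_)
  ring

theorem word_norm {n : ℕ} {K : Type*} [NormedAddCommGroup K] [InnerProductSpace ℂ K]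
    [CompleteSpace K] (T : Fin n → K →L[ℂ] K) (a : List (Fin n) → ℂ)
    (hT : Real.sqrt ‖∑ i, T i * ContinuousLinearMap.adjoint (T i)‖ ≤ 1 / 3) (k : ℕ) :
    ‖∑ w : Fin k → Fin n, ((‖a (List.ofFn w)‖ : ℂ)) • wordProd T (List.ofFn w)‖ ≤
      Real.sqrt (∑ w : Fin k → Fin n, ‖a (List.ofFn w)‖ ^ 2) * (1 / 3) ^ k := by
  rw [← (ContinuousLinearMap.adjoint (𝕜 := ℂ) (E := K) (F := K)).norm_map]
  refine ContinuousLinearMap.opNorm_le_bound _ (by positivity) fun x => ?_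
  rw [map_sum, ContinuousLinearMap.sum_apply]
  have hh : ∀ w : Fin k → Fin n, ‖(ContinuousLinearMap.adjoint
      (((‖a (List.ofFn w)‖ : ℂ)) • wordProd T (List.ofFn w))) x‖ =
      ‖a (List.ofFn w)‖ * ‖ContinuousLinearMap.adjoint (wordProd T (List.ofFn w)) x‖ := by
    intro w
    rw [LinearIsometryEquiv.map_smulₛₗ, ContinuousLinearMap.smul_apply, norm_smul]
    simp
  refine (norm_sum_le _ _).trans ?_
  rw [Finset.sum_congr rfl fun w _ => hh w]
  refine (Real.sum_mul_le_sqrt_mul_sqrt _ _ _).trans ?_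
  rw [mul_assoc]
  refine mul_le_mul_of_nonneg_left ?_ (Real.sqrt_nonneg _)
  refine Real.sqrt_le_iff.2 ⟨by positivity, ?_⟩
  rw [mul_pow]
  exact sum_adj_sq T (1 / 3) (adj_base T hT) k x

theorem sum_wordProd_sq {n : ℕ} (r : Fin n → ℝ) (k : ℕ) :
    ∑ w : Fin k → Fin n, wordProd r (List.ofFn w) ^ 2 = (∑ i, r i ^ 2) ^ k := by
  induction k with
  | zero => simp [wordProd]
  | succ k ih =>
    rw [sum_ofFn_succ (fun l => wordProd r l ^ 2), pow_succ', ← ih, Finset.sum_mul]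
    refine Finset.sum_congr rfl fun i _ => ?_
    rw [Finset.mul_sum]
    refine Finset.sum_congr rfl fun w _ => ?_
    simp [wordProd, mul_pow]

theorem wordProd_nonneg {n : ℕ} (r : Fin n → ℝ) (hr : ∀ i, 0 ≤ r i) (l : List (Fin n)) :
    0 ≤ wordProd r l := by
  induction l with
  | nil => simp [wordProd]
  | cons i l ih =>
    have : wordProd r (i :: l) = r i * wordProd r l := by simp [wordProd]
    rw [this]
    exact mul_nonneg (hr i) ih

theorem wordS_apply {n : ℕ} (S : Fin n → Fock n →L[ℂ] Fock n)
    (hS : ∀ (i : Fin n) (α : List (Fin n)), S i (fockBasis n α) = fockBasis n (i :: α))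
    (l α : List (Fin n)) : wordProd S l (fockBasis n α) = fockBasis n (l ++ α) := by
  induction l with
  | nil => simp [wordProd]
  | cons i l ih =>
    have : wordProd S (i :: l) = S i * wordProd S l := by simp [wordProd]
    rw [this, ContinuousLinearMap.mul_apply, ih, hS]
    rfl

theorem inner_fockBasis {n : ℕ} (α β : List (Fin n)) :
    inner ℂ (fockBasis n α) (fockBasis n β) = if α = β then (1 : ℂ) else 0 := by
  unfold fockBasis
  rw [lp.inner_single_left]
  by_cases h : α = β
  · subst h; simp
  · simp [h, lp.single_apply, Pi.single_apply]

theorem coeff_r {n : ℕ} (a : List (Fin n) → ℂ) (ha_im : (a []).im = 0)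
    (S : Fin n → Fock n →L[ℂ] Fock n)
    (hS : ∀ (i : Fin n) (α : List (Fin n)), S i (fockBasis n α) = fockBasis n (i :: α))
    (r : ℝ) (hopsum : 
      Summable (fun k : ℕ => ∑ w : Fin k → Fin n,
        ((r : ℂ) ^ k * a (List.ofFn w)) • wordProd S (List.ofFn w)))
    (hre : 
      (2 : ℂ)⁻¹ • ((∑' k : ℕ, ∑ w : Fin k → Fin n,
          ((r : ℂ) ^ k * a (List.ofFn w)) • wordProd S (List.ofFn w)) +
        ContinuousLinearMap.adjoint (∑' k : ℕ, ∑ w : Fin k → Fin n,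
          ((r : ℂ) ^ k * a (List.ofFn w)) • wordProd S (List.ofFn w))) ≤ 1)
    (k : ℕ) (hk : 1 ≤ k) :
    r ^ k * Real.sqrt (∑ w : Fin k → Fin n, ‖a (List.ofFn w)‖ ^ 2) ≤ 2 * (1 - (a []).re) := by
  set F : ℕ → (Fock n →L[ℂ] Fock n) := fun k => ∑ w : Fin k → Fin n,
        ((r : ℂ) ^ k * a (List.ofFn w)) • wordProd S (List.ofFn w) with hF
  set G := ∑' k, F k with hG
  -- quadratic form inequality
  have hq : ∀ x, (inner ℂ x (G x)).re ≤ ‖x‖ ^ 2 := by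
    intro x
    have h1 := (ContinuousLinearMap.le_def _ _).1 hre
    have h2 := h1.re_inner_nonneg_right x
    have h3 : inner ℂ x (ContinuousLinearMap.adjoint G x) = (starRingEnd ℂ) (inner ℂ x (G x)) := by
      rw [ContinuousLinearMap.adjoint_inner_right, inner_conj_symm]
    simp only [ContinuousLinearMap.sub_apply, ContinuousLinearMap.smul_apply,
      ContinuousLinearMap.add_apply, ContinuousLinearMap.one_apply, inner_sub_right,
      inner_smul_right, inner_add_right, h3, Complex.add_conj] at h2
    have h4 : (inner ℂ x x : ℂ) = ((‖x‖ ^ 2 : ℝ) : ℂ) := by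
      rw [inner_self_eq_norm_sq_to_K]; norm_cast
    rw [h4] at h2
    have h5 : (2 : ℂ)⁻¹ * ((2 * (inner ℂ x (G x)).re : ℝ) : ℂ) = (((inner ℂ x (G x)).re : ℝ) : ℂ) := by
      push_cast; ring
    rw [h5] at h2
    simp only [← Complex.ofReal_sub] at h2
    have h6 : 0 ≤ ((‖x‖ ^ 2 - (inner ℂ x (G x)).re : ℝ) : ℂ).re := h2
    rw [Complex.ofReal_re] at h6
    linarith
  have hFb : ∀ j α, F j (fockBasis n α) = ∑ w : Fin j → Fin n,
      ((r : ℂ) ^ j * a (List.ofFn w)) • fockBasis n (List.ofFn w ++ α) := by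
    intro j α
    simp only [hF, ContinuousLinearMap.sum_apply, ContinuousLinearMap.smul_apply,
      wordS_apply S hS]
  have hz : ∀ j α β, β.length ≠ j + α.length →
      inner ℂ (fockBasis n β) (F j (fockBasis n α)) = 0 := by
    intro j α β h
    rw [hFb, inner_sum]
    refine Finset.sum_eq_zero fun w _ => ?_
    rw [inner_smul_right, inner_fockBasis, if_neg, mul_zero]
    rintro rfl
    simp at h
  set A := Real.sqrt (∑ w : Fin k → Fin n, ‖a (List.ofFn w)‖ ^ 2) with hA
  have hA2 : A ^ 2 = ∑ w : Fin k → Fin n, ‖a (List.ofFn w)‖ ^ 2 :=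
    Real.sq_sqrt (Finset.sum_nonneg fun _ _ => by positivity)
  set e := fockBasis n [] with he
  set y : Fock n := ∑ w : Fin k → Fin n, a (List.ofFn w) • fockBasis n (List.ofFn w) with hy
  have hyy : inner ℂ y y = ((A ^ 2 : ℝ) : ℂ) := by
    rw [hA2, hy, sum_inner]
    push_cast
    refine Finset.sum_congr rfl fun w _ => ?_
    rw [inner_sum, Finset.sum_eq_single w]
    · rw [inner_smul_left, inner_smul_right, inner_fockBasis, if_pos rfl, mul_one,
        Complex.conj_mul']
    · intro v _ hv
      rw [inner_smul_left, inner_smul_right, inner_fockBasis, if_neg, mul_zero, mul_zero]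
      exact fun h => hv (List.ofFn_injective h).symm
    · simp
  have hee : inner ℂ e e = (1 : ℂ) := by rw [he, inner_fockBasis, if_pos rfl]
  have hey : inner ℂ e y = (0 : ℂ) := by
    rw [hy, inner_sum]
    refine Finset.sum_eq_zero fun w _ => ?_
    rw [inner_smul_right, inner_fockBasis, if_neg, mul_zero]
    intro h
    have := congrArg List.length h
    simp at this
    omega
  have hye : inner ℂ y e = (0 : ℂ) := by rw [← inner_conj_symm, hey, map_zero]
  have zee : ∀ j, j ≠ 0 → inner ℂ e (F j e) = (0 : ℂ) := fun j hj => hz _ _ _ (by simpa using hj.symm)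
  have zey : ∀ j, inner ℂ e (F j y) = (0 : ℂ) := by
    intro j
    rw [hy, map_sum, inner_sum]
    refine Finset.sum_eq_zero fun w _ => ?_
    rw [map_smul, inner_smul_right, hz, mul_zero]
    simp; omega
  have zyy : ∀ j, j ≠ 0 → inner ℂ y (F j y) = (0 : ℂ) := by
    intro j hj
    rw [hy, map_sum, inner_sum]
    refine Finset.sum_eq_zero fun w _ => ?_
    rw [map_smul, inner_smul_right, sum_inner, Finset.sum_eq_zero, mul_zero]
    intro v _
    rw [inner_smul_left, hz, mul_zero]
    simp; omega
  have zye : ∀ j, j ≠ k → inner ℂ y (F j e) = (0 : ℂ) := by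
    intro j hj
    rw [hy, sum_inner]
    refine Finset.sum_eq_zero fun w _ => ?_
    rw [inner_smul_left, hz, mul_zero]
    simp; omega
  have hFk : F k e = ((r : ℂ) ^ k) • y := by
    rw [he, hFb, hy, Finset.smul_sum]
    refine Finset.sum_congr rfl fun w _ => ?_
    rw [List.append_nil, smul_smul]
  have hF0 : F 0 = a [] • 1 := by simp [hF, wordProd]
  set x := (A : ℂ) • e + y with hx
  have hxx : (inner ℂ x x : ℂ) = ((2 * A ^ 2 : ℝ) : ℂ) := by
    simp only [hx, inner_add_left, inner_add_right, inner_smul_left, inner_smul_right, hee, hey,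
      hye, hyy, Complex.conj_ofReal]
    push_cast; ring
  have hxn : ‖x‖ ^ 2 = 2 * A ^ 2 := by
    have : (inner ℂ x x : ℂ) = ((‖x‖ ^ 2 : ℝ) : ℂ) := by
      rw [inner_self_eq_norm_sq_to_K]; norm_cast
    rw [this] at hxx
    exact_mod_cast hxx
  have hexp : ∀ j, (inner ℂ x (F j x) : ℂ) = A * A * inner ℂ e (F j e) + A * inner ℂ y (F j e)
      + A * inner ℂ e (F j y) + inner ℂ y (F j y) := by
    intro j
    simp only [hx, map_add, map_smul, inner_add_left, inner_add_right, inner_smul_left,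
      inner_smul_right, Complex.conj_ofReal]
    ring
  have hsum : HasSum (fun j => (inner ℂ x (F j x) : ℂ)) (inner ℂ x (G x)) := by
    have h1 : HasSum F G := hopsum.hasSum
    have h2 : HasSum (fun j => F j x) (G x) :=
      h1.mapL (ContinuousLinearMap.apply ℂ (Fock n) x)
    exact h2.mapL (innerSL ℂ x)
  have hval : (inner ℂ x (G x) : ℂ) = ((2 * A ^ 2 * (a []).re + r ^ k * A ^ 3 : ℝ) : ℂ) := by
    have h0k : (0 : ℕ) ≠ k := by omega
    have h1 := hsum.unique (hasSum_sum_of_ne_finset_zero (s := {0, k}) (by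
      intro j hj
      simp only [Finset.mem_insert, Finset.mem_singleton, not_or] at hj
      rw [hexp, zee j hj.1, zey, zyy j hj.1, zye j hj.2]
      ring))
    rw [h1, Finset.sum_pair h0k, hF0]
    have ha : a [] = (((a []).re : ℝ) : ℂ) := Complex.ext (by simp) (by simp [ha_im])
    rw [ContinuousLinearMap.smul_apply, ContinuousLinearMap.one_apply, inner_smul_right, hxx,
      hexp, zee k h0k.symm, zey, zyy k h0k.symm, hFk, inner_smul_right, hyy, ha]
    push_cast
    simp only [Complex.ofReal_re]
    ring
  have hfin := hq x
  rw [hval, Complex.ofReal_re, hxn] at hfin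
  have hA0 : 0 ≤ A := Real.sqrt_nonneg _
  rcases hA0.eq_or_lt with h | h
  · -- degenerate case: test against the vacuum vector
    have h1 := hq e
    have hsum : HasSum (fun j => (inner ℂ e (F j e) : ℂ)) (inner ℂ e (G e)) := by
      have h1 : HasSum F G := hopsum.hasSum
      have h2 : HasSum (fun j => F j e) (G e) :=
        h1.mapL (ContinuousLinearMap.apply ℂ (Fock n) e)
      exact h2.mapL (innerSL ℂ e)
    have h2 := hsum.unique (hasSum_single 0 zee)
    have h3 : ‖e‖ ^ 2 = 1 := by
      have : (inner ℂ e e : ℂ) = ((‖e‖ ^ 2 : ℝ) : ℂ) := by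
        rw [inner_self_eq_norm_sq_to_K]; norm_cast
      rw [hee] at this
      exact_mod_cast this.symm
    rw [h2, h3, hF0, ContinuousLinearMap.smul_apply, ContinuousLinearMap.one_apply,
      inner_smul_right, hee, mul_one] at h1
    rw [← h]
    linarith
  · have h2 : 0 < A ^ 2 := by positivity
    have : (r ^ k * A) * A ^ 2 ≤ (2 * (1 - (a []).re)) * A ^ 2 := by nlinarith
    exact le_of_mul_le_mul_right this h2

theorem stmt_10 (n : ℕ) (hn : 1 ≤ n)
    (a : List (Fin n) → ℂ) (ha_im : (a []).im = 0) (ha_nonneg : 0 ≤ (a []).re)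
    (hconv : ∀ r : ℝ, 0 ≤ r → r < 1 →
      Summable (fun k : ℕ =>
        r ^ k * Real.sqrt (∑ w : Fin k → Fin n, ‖a (List.ofFn w)‖ ^ 2)))
    (S : Fin n → Fock n →L[ℂ] Fock n)
    (hS : ∀ (i : Fin n) (α : List (Fin n)), S i (fockBasis n α) = fockBasis n (i :: α))
    (hopsum : ∀ r : ℝ, 0 ≤ r → r < 1 →
      Summable (fun k : ℕ => ∑ w : Fin k → Fin n,
        ((r : ℂ) ^ k * a (List.ofFn w)) • wordProd S (List.ofFn w)))
    (hre : ∀ r : ℝ, 0 ≤ r → r < 1 →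
      (2 : ℂ)⁻¹ • ((∑' k : ℕ, ∑ w : Fin k → Fin n,
          ((r : ℂ) ^ k * a (List.ofFn w)) • wordProd S (List.ofFn w)) +
        ContinuousLinearMap.adjoint (∑' k : ℕ, ∑ w : Fin k → Fin n,
          ((r : ℂ) ^ k * a (List.ofFn w)) • wordProd S (List.ofFn w))) ≤ 1) :
    (∀ k : ℕ, 1 ≤ k →
      Real.sqrt (∑ w : Fin k → Fin n, ‖a (List.ofFn w)‖ ^ 2) ≤
        2 * (1 - (a []).re)) ∧
    (∀ (K : Type) [NormedAddCommGroup K] [InnerProductSpace ℂ K] [CompleteSpace K],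
      ∀ T : Fin n → K →L[ℂ] K,
        Real.sqrt ‖∑ i, T i * ContinuousLinearMap.adjoint (T i)‖ ≤ 1 / 3 →
        Summable (fun k : ℕ => ‖∑ w : Fin k → Fin n,
          ((‖a (List.ofFn w)‖ : ℂ)) • wordProd T (List.ofFn w)‖) ∧
        ∑' k : ℕ, ‖∑ w : Fin k → Fin n,
          ((‖a (List.ofFn w)‖ : ℂ)) • wordProd T (List.ofFn w)‖ ≤ 1) ∧
    (∀ r : Fin n → ℝ, (∀ i, 0 ≤ r i) → Real.sqrt (∑ i, r i ^ 2) ≤ 1 / 3 →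
      Summable (fun α : List (Fin n) => ‖a α‖ * wordProd r α) ∧
      ∑' α : List (Fin n), ‖a α‖ * wordProd r α ≤ 1) := by
  have hi : ∀ k : ℕ, 1 ≤ k →
      Real.sqrt (∑ w : Fin k → Fin n, ‖a (List.ofFn w)‖ ^ 2) ≤ 2 * (1 - (a []).re) := by
    intro k hk
    have hc : Filter.Tendsto (fun r : ℝ => r ^ k *
        Real.sqrt (∑ w : Fin k → Fin n, ‖a (List.ofFn w)‖ ^ 2)) (nhdsWithin 1 (Set.Iio 1))
        (nhds (1 ^ k * Real.sqrt (∑ w : Fin k → Fin n, ‖a (List.ofFn w)‖ ^ 2))) := by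
      refine Filter.Tendsto.mono_left (Continuous.tendsto ?_ 1) nhdsWithin_le_nhds
      fun_prop
    rw [one_pow, one_mul] at hc
    refine le_of_tendsto hc ?_
    filter_upwards [Ioo_mem_nhdsLT (show (0 : ℝ) < 1 by norm_num)] with r hr
    exact coeff_r a ha_im S hS r (hopsum r hr.1.le hr.2) (hre r hr.1.le hr.2) k hk
  have ha0 : ‖a []‖ = (a []).re := by
    have ha : a [] = (((a []).re : ℝ) : ℂ) := Complex.ext (by simp) (by simp [ha_im])
    rw [ha, Complex.norm_real, Complex.ofReal_re, Real.norm_of_nonneg ha_nonneg]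
  refine ⟨hi, ?_, ?_⟩
  · intro K _ _ _ T hT
    refine series_bound (a []).re _ _ (fun k => norm_nonneg _) hi (word_norm T a hT) ?_
    refine (word_norm T a hT 0).trans ?_
    simp [ha0, Real.sqrt_sq ha_nonneg]
  · intro r hr hr2
    have hr3 : ∑ i, r i ^ 2 ≤ (1 / 3 : ℝ) ^ 2 := (Real.sqrt_le_left (by norm_num)).1 hr2
    have hnn : ∀ l, 0 ≤ ‖a l‖ * wordProd r l := fun l =>
      mul_nonneg (norm_nonneg _) (wordProd_nonneg r hr l)
    have hb : ∀ k : ℕ, ∑ w : Fin k → Fin n, ‖a (List.ofFn w)‖ * wordProd r (List.ofFn w) ≤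
        Real.sqrt (∑ w : Fin k → Fin n, ‖a (List.ofFn w)‖ ^ 2) * (1 / 3) ^ k := by
      intro k
      refine (Real.sum_mul_le_sqrt_mul_sqrt _ _ _).trans ?_
      refine mul_le_mul_of_nonneg_left ?_ (Real.sqrt_nonneg _)
      refine Real.sqrt_le_iff.2 ⟨by positivity, ?_⟩
      rw [sum_wordProd_sq, ← pow_mul, mul_comm k 2, pow_mul]
      exact pow_le_pow_left₀ (Finset.sum_nonneg fun _ _ => by positivity) hr3 k
    obtain ⟨h1, h2⟩ := series_bound (a []).re _
      (fun k : ℕ => ∑ w : Fin k → Fin n, ‖a (List.ofFn w)‖ * wordProd r (List.ofFn w))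
      (fun k => Finset.sum_nonneg fun w _ => hnn _) hi hb
      ((hb 0).trans (by simp [ha0, Real.sqrt_sq ha_nonneg]))
    have hsig : Summable (fun p : (Σ k, Fin k → Fin n) =>
        ‖a (List.ofFn p.2)‖ * wordProd r (List.ofFn p.2)) := by
      refine (summable_sigma_of_nonneg fun p => hnn _).2 ⟨fun k => Summable.of_finite, ?_⟩
      simpa only [tsum_fintype] using h1
    have hcomp : (fun p : (Σ k, Fin k → Fin n) =>
        ‖a (List.ofFn p.2)‖ * wordProd r (List.ofFn p.2)) =
        (fun α : List (Fin n) => ‖a α‖ * wordProd r α) ∘ (List.equivSigmaTuple (α := Fin n)).symm := by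
      funext p
      simp [List.equivSigmaTuple]
    constructor
    · rw [← (List.equivSigmaTuple (α := Fin n)).symm.summable_iff, ← hcomp]
      exact hsig
    · rw [← (List.equivSigmaTuple (α := Fin n)).symm.tsum_eq]
      have := hsig.tsum_sigma
      simp only [tsum_fintype] at this
      rw [show (∑' c, ‖a ((List.equivSigmaTuple (α := Fin n)).symm c)‖ *
        wordProd r ((List.equivSigmaTuple (α := Fin n)).symm c)) = _ from
        congrArg tsum hcomp.symm]
      rw [this]
      exact h2
end

section
/- (Bohr's inequality) Let f(z) = ∑_{k=0}^∞ a_k z^k be an analytic function on 𝔻 that is bounded, i.e., ‖f‖_∞ := sup_{z ∈ 𝔻} |f(z)| < ∞. Then ∑_{k=0}^∞ |a_k| r^k ≤ ‖f‖_∞ for every r with 0 ≤ r ≤ 1/3. -/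
open scoped BigOperators

lemma bohr_E (m : ℤ) : ∫ t in (0:ℝ)..(2 * Real.pi), Complex.exp ((m * Complex.I) * t) =
    if m = 0 then (2 * Real.pi : ℂ) else 0 := by
  split_ifs with h
  · simp [h]
  · have hm : (m : ℂ) * Complex.I ≠ 0 := mul_ne_zero (by exact_mod_cast h) Complex.I_ne_zero
    rw [integral_exp_mul_complex hm]
    have : (m : ℂ) * Complex.I * ((2 * Real.pi : ℝ) : ℂ) = m * (2 * Real.pi * Complex.I) := by
      push_cast; ring
    rw [this, Complex.exp_int_mul_two_pi_mul_I]
    simp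

lemma bohr_align (x y : ℂ) : ∃ ν : ℂ, ‖ν‖ = 1 ∧ ‖x + ν * y‖ = ‖x‖ + ‖y‖ := by
  by_cases hx : x = 0
  · exact ⟨1, by simp, by simp [hx]⟩
  by_cases hy : y = 0
  · exact ⟨1, by simp, by simp [hy]⟩
  have hx' : ‖x‖ ≠ 0 := norm_ne_zero_iff.2 hx
  have hy' : ‖y‖ ≠ 0 := norm_ne_zero_iff.2 hy
  refine ⟨x * ‖y‖ / (‖x‖ * y), ?_, ?_⟩
  · simp only [norm_div, norm_mul, Complex.norm_real, norm_norm]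
    field_simp
  · have hxc : (‖x‖ : ℂ) ≠ 0 := by exact_mod_cast hx'
    have : x + x * ‖y‖ / (‖x‖ * y) * y = x * ((1 + ‖y‖ / ‖x‖ : ℝ) : ℂ) := by
      push_cast; field_simp
    rw [this, norm_mul, Complex.norm_real, Real.norm_of_nonneg (by positivity)]
    field_simp

lemma bohr_key (a : ℕ → ℂ) (f : ℂ → ℂ)
    (hf : ∀ z ∈ Metric.ball (0 : ℂ) 1, HasSum (fun k : ℕ => a k * z ^ k) (f z))
    (C : ℝ) (hC : ∀ z ∈ Metric.ball (0 : ℂ) 1, ‖f z‖ ≤ C) (k : ℕ) (hk : k ≠ 0)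
    (ρ : ℝ) (h0 : 0 ≤ ρ) (h1 : ρ < 1) (ν : ℂ) (hν : ‖ν‖ = 1) :
    ‖a 0 + ν * (a k * ρ ^ k / 2)‖ ≤ C := by
  have hπ := Real.pi_pos
  set e : ℤ → ℝ → ℂ := fun m t => Complex.exp ((m * Complex.I) * t) with he
  have hec : ∀ m, Continuous (e m) := fun m => by simp only [he]; fun_prop
  have hen : ∀ m t, ‖e m t‖ = 1 := fun m t => by
    have : (m : ℂ) * Complex.I * t = ((m * t : ℝ) : ℂ) * Complex.I := by push_cast; ring
    simp only [he]; rw [this, Complex.norm_exp_ofReal_mul_I]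
  have hem : ∀ m n t, e m t * e n t = e (m + n) t := fun m n t => by
    simp only [he]; rw [← Complex.exp_add]; congr 1; push_cast; ring
  have hei : ∀ m, ∫ t in (0:ℝ)..(2 * Real.pi), e m t = if m = 0 then (2 * Real.pi : ℂ) else 0 :=
    bohr_E
  have hec' : ∀ m t, (starRingEnd ℂ) (e m t) = e (-m) t := fun m t => by
    simp only [he]; rw [← Complex.exp_conj]; congr 1; simp
  have hint : ∀ m, IntervalIntegrable (e m) MeasureTheory.volume 0 (2 * Real.pi) :=
    fun m => (hec m).intervalIntegrable _ _
  set w : ℝ → ℝ := fun t => 1 + (ν * e (-k) t).re with hw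
  have hwc : Continuous w := by
    have := hec (-k)
    simp only [hw]; fun_prop
  have hwn : ∀ t, 0 ≤ w t := fun t => by
    have := Complex.abs_re_le_norm (ν * e (-k) t)
    rw [norm_mul, hν, hen, one_mul, abs_le] at this
    simp only [hw]; linarith [this.1]
  have hw2 : ∀ t, w t ≤ 2 := fun t => by
    have := Complex.abs_re_le_norm (ν * e (-k) t)
    rw [norm_mul, hν, hen, one_mul, abs_le] at this
    simp only [hw]; linarith [this.2]
  have hwe : ∀ t, (w t : ℂ) = e 0 t + ν / 2 * e (-k) t + (starRingEnd ℂ) ν / 2 * e k t := fun t => by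
    have h := Complex.re_eq_add_conj (ν * e (-k) t)
    rw [map_mul, hec', neg_neg] at h
    have h0 : e 0 t = 1 := by simp [he]
    simp only [hw]; push_cast; rw [h, h0]; ring
  -- integral of basis function times weight
  have hmul : ∀ n : ℕ, ∀ t, e n t * w t =
      e n t + ν / 2 * e (n - k) t + (starRingEnd ℂ) ν / 2 * e (n + k) t := fun n t => by
    have h1 := hem n 0 t
    have h2 := hem n (-k) t
    have h3 := hem n k t
    rw [add_zero] at h1
    rw [← sub_eq_add_neg] at h2
    rw [hwe, ← h2, ← h3]
    linear_combination h1
  have hI : ∀ n : ℕ, ∫ t in (0:ℝ)..(2 * Real.pi), e n t * w t =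
      (if n = 0 then (2 * Real.pi : ℂ) else 0) + ν / 2 * (if n = k then (2 * Real.pi : ℂ) else 0) := by
    intro n
    simp_rw [hmul]
    rw [intervalIntegral.integral_add (((hint _).add ((hint _).const_mul _))) ((hint _).const_mul _),
      intervalIntegral.integral_add (hint _) ((hint _).const_mul _),
      intervalIntegral.integral_const_mul, intervalIntegral.integral_const_mul, hei, hei, hei]
    have : (n : ℤ) + k ≠ 0 := by omega
    simp [this, sub_eq_zero]
  have hz : ∀ t, (ρ : ℂ) * e 1 t ∈ Metric.ball (0:ℂ) 1 := fun t => by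
    rw [mem_ball_zero_iff, norm_mul, hen, mul_one, Complex.norm_real, Real.norm_of_nonneg h0]
    exact h1
  have hpow : ∀ (n : ℕ) t, (e 1 t) ^ n = e n t := fun n t => by
    simp only [he]; rw [← Complex.exp_nat_mul]; congr 1; push_cast; ring
  have hsum : Summable (fun n => ‖a n‖ * ρ ^ n) := by
    have := (hf ρ (by simpa [abs_of_nonneg h0] using h1)).summable.norm
    simpa [abs_of_nonneg h0] using this
  have hS : ∀ t, HasSum (fun n : ℕ => a n * ρ ^ n * (e n t * w t)) (f (ρ * e 1 t) * w t) := by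
    intro t
    have := (hf _ (hz t)).mul_right (w t : ℂ)
    refine this.congr_fun ?_ |> id
    intro n
    rw [mul_pow, hpow]; ring
  have key := intervalIntegral.hasSum_integral_of_dominated_convergence (μ := MeasureTheory.volume)
    (a := 0) (b := 2 * Real.pi)
    (F := fun (n : ℕ) t => a n * ρ ^ n * (e n t * w t)) (f := fun t => f (ρ * e 1 t) * w t)
    (fun n _ => ‖a n‖ * ρ ^ n * 2)
    (fun n => by
      have := hec n
      exact Continuous.aestronglyMeasurable (by fun_prop))
    (fun n => Filter.Eventually.of_forall fun t _ => by
      simp only [norm_mul, hen, norm_pow, Complex.norm_real, Real.norm_of_nonneg h0,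
        Real.norm_of_nonneg (hwn t), one_mul]
      exact mul_le_mul_of_nonneg_left (hw2 t) (by positivity))
    (Filter.Eventually.of_forall fun t _ => hsum.mul_right 2)
    (by simp)
    (Filter.Eventually.of_forall fun t _ => hS t)
  simp only [intervalIntegral.integral_const_mul, hI] at key
  have fin := hasSum_sum_of_ne_finset_zero (L := .unconditional ℕ) (s := ({0, k} : Finset ℕ))
    (f := fun n : ℕ => a n * (ρ:ℂ) ^ n * ((if n = 0 then (2 * Real.pi : ℂ) else 0) +
      ν / 2 * (if n = k then (2 * Real.pi : ℂ) else 0)))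
    (by
      intro n hn
      simp only [Finset.mem_insert, Finset.mem_singleton, not_or] at hn
      simp [hn.1, hn.2])
  have hEq := key.unique fin
  rw [Finset.sum_pair (Ne.symm hk)] at hEq
  simp only [if_true, hk, hk.symm, if_false, pow_zero, mul_one, mul_zero, add_zero, zero_add] at hEq
  have hWi : ∫ t in (0:ℝ)..(2 * Real.pi), w t = 2 * Real.pi := by
    have h := hI 0
    have h00 : ∀ t, e ((0:ℕ):ℤ) t = 1 := fun t => by simp [he]
    simp only [h00, one_mul, hk.symm, if_true, if_false, mul_zero, add_zero] at h
    rw [intervalIntegral.integral_ofReal] at h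
    exact_mod_cast h
  have hle : ‖∫ t in (0:ℝ)..(2 * Real.pi), f (ρ * e 1 t) * w t‖ ≤
      ∫ t in (0:ℝ)..(2 * Real.pi), C * w t := by
    apply intervalIntegral.norm_integral_le_of_norm_le (by positivity)
    · refine Filter.Eventually.of_forall fun t _ => ?_
      rw [norm_mul, Complex.norm_real, Real.norm_of_nonneg (hwn t)]
      exact mul_le_mul_of_nonneg_right (hC _ (hz t)) (hwn t)
    · exact Continuous.intervalIntegrable (by fun_prop) _ _
  rw [intervalIntegral.integral_const_mul, hWi, hEq] at hle
  have : a 0 * (2 * (Real.pi : ℂ)) + a k * (ρ:ℂ) ^ k * (ν / 2 * (2 * Real.pi)) =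
      (a 0 + ν * (a k * ρ ^ k / 2)) * ((2 * Real.pi : ℝ) : ℂ) := by push_cast; ring
  rw [this, norm_mul, Complex.norm_real, Real.norm_of_nonneg (by positivity)] at hle
  exact le_of_mul_le_mul_right hle (by positivity)

lemma bohr_coeff (a : ℕ → ℂ) (f : ℂ → ℂ)
    (hf : ∀ z ∈ Metric.ball (0 : ℂ) 1, HasSum (fun k : ℕ => a k * z ^ k) (f z))
    (C : ℝ) (hC : ∀ z ∈ Metric.ball (0 : ℂ) 1, ‖f z‖ ≤ C) (k : ℕ) (hk : k ≠ 0) :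
    ‖a k‖ ≤ 2 * (C - ‖a 0‖) := by
  have h : ∀ ρ ∈ Set.Ico (0:ℝ) 1, ‖a 0‖ + ‖a k‖ * ρ ^ k / 2 ≤ C := by
    rintro ρ ⟨h0, h1⟩
    obtain ⟨ν, hν, he⟩ := bohr_align (a 0) (a k * ρ ^ k / 2)
    have := bohr_key a f hf C hC k hk ρ h0 h1 ν hν
    rw [he] at this
    simpa [abs_of_nonneg h0] using this
  have hcl : (1:ℝ) ∈ closure (Set.Ico (0:ℝ) 1) := by
    rw [closure_Ico (by norm_num)]; simp
  have hlim : ‖a 0‖ + ‖a k‖ * (1:ℝ) ^ k / 2 ≤ C :=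
    le_on_closure (f := fun ρ : ℝ => ‖a 0‖ + ‖a k‖ * ρ ^ k / 2) (g := fun _ => C) h
      (by fun_prop) (by fun_prop) hcl
  rw [one_pow] at hlim
  linarith

theorem stmt_13 (a : ℕ → ℂ) (f : ℂ → ℂ)
    (hf : ∀ z ∈ Metric.ball (0 : ℂ) 1, HasSum (fun k : ℕ => a k * z ^ k) (f z))
    (C : ℝ) (hC : ∀ z ∈ Metric.ball (0 : ℂ) 1, ‖f z‖ ≤ C) :
    ∀ r : ℝ, 0 ≤ r → r ≤ 1 / 3 →
      Summable (fun k : ℕ => ‖a k‖ * r ^ k) ∧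
      ∑' k : ℕ, ‖a k‖ * r ^ k ≤ C := by
  intro r h0 h1
  have hc := bohr_coeff a f hf C hC
  have hD : 0 ≤ C - ‖a 0‖ := by
    have := hc 1 one_ne_zero
    linarith [norm_nonneg (a 1)]
  have hsum : Summable (fun n => ‖a n‖ * r ^ n) := by
    have := (hf r (by simp [abs_of_nonneg h0]; linarith)).summable.norm
    simpa [abs_of_nonneg h0] using this
  refine ⟨hsum, ?_⟩
  rw [hsum.tsum_eq_zero_add]
  have hg : HasSum (fun n : ℕ => 2 * (C - ‖a 0‖) * (1/3) * (1/3:ℝ) ^ n)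
      (2 * (C - ‖a 0‖) * (1/3) * (1 - 1/3)⁻¹) :=
    (hasSum_geometric_of_lt_one (by norm_num) (by norm_num)).mul_left _
  have := ((summable_nat_add_iff 1).2 hsum).tsum_le_tsum (g := fun n : ℕ => 2 * (C - ‖a 0‖) * (1/3) * (1/3:ℝ) ^ n) (fun n => by
    have h2 : r ^ (n+1) ≤ (1/3:ℝ) ^ (n+1) := pow_le_pow_left₀ h0 h1 _
    calc ‖a (n+1)‖ * r ^ (n+1) ≤ 2 * (C - ‖a 0‖) * (1/3:ℝ) ^ (n+1) :=
          mul_le_mul (hc _ (Nat.succ_ne_zero n)) h2 (by positivity) (by linarith)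
      _ = _ := by ring) hg.summable
  rw [hg.tsum_eq] at this
  norm_num at this ⊢
  linarith
end
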